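/- arXiv:1607.07205 — 3 statements merged into one kernel-verified Lean document; each statement's English description precedes it below -/
import Mathlib

section
/- Let R be a commutative principal ideal domain and A ∈ sl_n(R) a trace-zero matrix with n ≥ 2. Then there exist matrices X ∈ sl_n(R) and Y ∈ M_n(R) such that XY − YX = A, where X can be chosen such that for every maximal ideal p of R, the reduction X mod p is gl_n(R/p)-regular. -/
open Matrix

/-- The centralizer of a matrix `X` inside all `n × n` matrices, as a submodule. -/
def glCent {R : Type*} [CommRing R] {n : ℕ} (X : Matrix (Fin n) (Fin n) R) :
    Submodule R (Matrix (Fin n) (Fin n) R) where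
  carrier := {Y | X * Y = Y * X}
  add_mem' := fun {a b} ha hb => by
    simp only [Set.mem_setOf_eq] at *
    rw [Matrix.mul_add, Matrix.add_mul, ha, hb]
  zero_mem' := by simp
  smul_mem' := fun c a ha => by
    simp only [Set.mem_setOf_eq] at *
    rw [Matrix.mul_smul, Matrix.smul_mul, ha]

/-- The centralizer of a matrix `X` inside the trace-zero `n × n` matrices, as a submodule. -/
def slCent {R : Type*} [CommRing R] {n : ℕ} (X : Matrix (Fin n) (Fin n) R) :
    Submodule R (Matrix (Fin n) (Fin n) R) where
  carrier := {Y | Y.trace = 0 ∧ X * Y = Y * X}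
  add_mem' := fun {a b} ha hb =>
    ⟨by rw [trace_add, ha.1, hb.1, add_zero],
     by rw [Matrix.mul_add, Matrix.add_mul, ha.2, hb.2]⟩
  zero_mem' := ⟨by simp, by simp⟩
  smul_mem' := fun c a ha =>
    ⟨by rw [trace_smul, ha.1, smul_zero],
     by rw [Matrix.mul_smul, Matrix.smul_mul, ha.2]⟩

/-- Bézout: some combination of `a` and `b` divides both. -/
lemma exists_combination_dvd {R : Type*} [CommRing R] [IsPrincipalIdealRing R] (a b : R) :
    ∃ x y, x * a + y * b ∣ a ∧ x * a + y * b ∣ b := by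
  obtain ⟨g, hg⟩ := (IsPrincipalIdealRing.principal (Ideal.span {a, b})).principal
  have hg' : Ideal.span {a, b} = Ideal.span {g} := hg
  have h1 : g ∈ Ideal.span {a, b} := hg' ▸ Ideal.mem_span_singleton_self g
  obtain ⟨x, y, hxy⟩ := Ideal.mem_span_pair.1 h1
  refine ⟨x, y, ?_, ?_⟩ <;> rw [hxy, ← Ideal.mem_span_singleton, ← hg'] <;>
    exact Ideal.subset_span (by simp)

lemma exists_coprime_factorization {R : Type*} [CommRing R] [IsDomain R] [IsPrincipalIdealRing R]
    (a b : R) : ∃ g p q, a = g * p ∧ b = g * q ∧ IsCoprime p q := by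
  obtain ⟨x, y, ⟨p, hp⟩, ⟨q, hq⟩⟩ := exists_combination_dvd a b
  by_cases h : x * a + y * b = 0
  · rw [h] at hp hq
    exact ⟨0, 1, 0, by simpa using hp, by simpa using hq, isCoprime_one_left⟩
  · refine ⟨_, p, q, hp, hq, x, y, mul_left_cancel₀ h ?_⟩
    linear_combination -x * hp - y * hq

/-- Every nonzero vector over a PID is a multiple of a unimodular one. -/
lemma exists_eq_smul_unimodular {R ι : Type*} [CommRing R] [IsDomain R] [IsPrincipalIdealRing R]
    [Fintype ι] (u : ι → R) (hu : u ≠ 0) :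
    ∃ (l : R) (v χ : ι → R), u = l • v ∧ χ ⬝ᵥ v = 1 := by
  obtain ⟨l, hl⟩ := (IsPrincipalIdealRing.principal (Ideal.span (Set.range u))).principal
  have hl' : Ideal.span (Set.range u) = Ideal.span {l} := hl
  have hdvd : ∀ i, l ∣ u i := fun i => by
    rw [← Ideal.mem_span_singleton, ← hl']
    exact Ideal.subset_span ⟨i, rfl⟩
  choose v hv using hdvd
  obtain ⟨χ, hχ⟩ := (Ideal.mem_span_range_iff_exists_fun (R := R)).1
    (hl' ▸ Ideal.mem_span_singleton_self l : l ∈ Ideal.span (Set.range u))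
  have h0 : l ≠ 0 := by
    rintro rfl
    exact hu (funext fun i => by simp [hv i])
  refine ⟨l, v, χ, funext hv, mul_left_cancel₀ h0 ?_⟩
  rw [mul_one]
  refine Eq.trans ?_ hχ
  simp only [dotProduct, Finset.mul_sum]
  exact Finset.sum_congr rfl fun i _ => by rw [hv i]; ring

/-- The value `φ B u` on the orthogonal pair `(u, φ)` generates an ideal that is maximal among
those generated by the values of `B` on orthogonal pairs. -/
structure IsMaximalValue {R ι : Type*} [CommRing R] [Fintype ι] (B : Matrix ι ι R)
    (u φ : ι → R) : Prop where
  orthogonal : φ ⬝ᵥ u = 0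
  dvd_of_dvd : ∀ v ψ : ι → R, ψ ⬝ᵥ v = 0 → ψ ⬝ᵥ B *ᵥ v ∣ φ ⬝ᵥ B *ᵥ u →
    φ ⬝ᵥ B *ᵥ u ∣ ψ ⬝ᵥ B *ᵥ v

namespace IsMaximalValue

variable {R ι : Type*} [CommRing R] [Fintype ι] {B : Matrix ι ι R} {u φ : ι → R}

lemma exists_pair [IsDomain R] [IsPrincipalIdealRing R] (B : Matrix ι ι R) :
    ∃ u φ, IsMaximalValue B u φ := by
  let S : Set (Ideal R) := {I | ∃ v ψ : ι → R, ψ ⬝ᵥ v = 0 ∧ I = Ideal.span {ψ ⬝ᵥ B *ᵥ v}}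
  obtain ⟨I, ⟨u, φ, h0, rfl⟩, hI⟩ := set_has_maximal_iff_noetherian.2
    (inferInstance : IsNoetherian R R) S ⟨_, 0, 0, by simp, rfl⟩
  refine ⟨u, φ, h0, fun v ψ hv hd => ?_⟩
  by_contra hn
  refine hI _ ⟨v, ψ, hv, rfl⟩ (lt_of_le_of_ne (Ideal.span_singleton_le_span_singleton.2 hd) ?_)
  intro he
  exact hn (Ideal.span_singleton_le_span_singleton.1 he.symm.le)

lemma transpose (h : IsMaximalValue B u φ) : IsMaximalValue Bᵀ φ u := by
  have key : ∀ v ψ : ι → R, ψ ⬝ᵥ Bᵀ *ᵥ v = v ⬝ᵥ B *ᵥ ψ := fun v ψ => by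
    rw [mulVec_transpose, dotProduct_comm, dotProduct_mulVec]
  refine ⟨by rw [dotProduct_comm, h.orthogonal], fun v ψ hv => ?_⟩
  rw [key, key]
  exact h.dvd_of_dvd ψ v (by rw [dotProduct_comm, hv])

lemma dvd_left [IsPrincipalIdealRing R] (h : IsMaximalValue B u φ) {ψ : ι → R}
    (hψ : ψ ⬝ᵥ u = 0) : φ ⬝ᵥ B *ᵥ u ∣ ψ ⬝ᵥ B *ᵥ u := by
  obtain ⟨x, y, h1, h2⟩ := exists_combination_dvd (φ ⬝ᵥ B *ᵥ u) (ψ ⬝ᵥ B *ᵥ u)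
  have he : (x • φ + y • ψ) ⬝ᵥ B *ᵥ u = x * (φ ⬝ᵥ B *ᵥ u) + y * (ψ ⬝ᵥ B *ᵥ u) := by
    simp [add_dotProduct]
  refine (h.dvd_of_dvd u (x • φ + y • ψ) ?_ (he ▸ h1)).trans (he ▸ h2)
  simp [add_dotProduct, h.orthogonal, hψ]

lemma prime_dvd_left [IsDomain R] [IsPrincipalIdealRing R] (h : IsMaximalValue B u φ) {p : R}
    (hp : Prime p) (hpg : p ∣ φ ⬝ᵥ B *ᵥ u) {v ψ₁ ψ₂ : ι → R} (h₁ : ψ₁ ⬝ᵥ v = 0)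
    (h₂ : ψ₂ ⬝ᵥ v = 0) (hv : ψ₁ ⬝ᵥ B *ᵥ v ∣ p * (φ ⬝ᵥ B *ᵥ u)) : p ∣ ψ₂ ⬝ᵥ B *ᵥ v := by
  obtain ⟨x, y, hx, hy⟩ := exists_combination_dvd (ψ₁ ⬝ᵥ B *ᵥ v) (ψ₂ ⬝ᵥ B *ᵥ v)
  have he : (x • ψ₁ + y • ψ₂) ⬝ᵥ B *ᵥ v = x * (ψ₁ ⬝ᵥ B *ᵥ v) + y * (ψ₂ ⬝ᵥ B *ᵥ v) := by
    simp [add_dotProduct]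
  rw [← he] at hx hy
  refine dvd_trans ?_ hy
  by_contra hn
  obtain ⟨k, hk⟩ := hx.trans hv
  obtain ⟨k', rfl⟩ := (hp.dvd_or_dvd (hk ▸ dvd_mul_right p _)).resolve_left hn
  refine hn (hpg.trans (h.dvd_of_dvd v _ ?_ ⟨k', mul_left_cancel₀ hp.ne_zero ?_⟩))
  · simp [add_dotProduct, h₁, h₂]
  · rw [hk]; ring

lemma exists_dual_of_ne_zero [IsDomain R] [IsPrincipalIdealRing R] (h : IsMaximalValue B u φ)
    (h0 : φ ⬝ᵥ B *ᵥ u ≠ 0) : ∃ χ : ι → R, χ ⬝ᵥ u = 1 := by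
  obtain ⟨l, v, χ, rfl, hχ⟩ := exists_eq_smul_unimodular u (by rintro rfl; simp at h0)
  have hl : l ≠ 0 := by rintro rfl; simp at h0
  have hv : φ ⬝ᵥ v = 0 := by simpa [hl] using h.orthogonal
  obtain ⟨k, hk⟩ := h.dvd_of_dvd v φ hv (by simp [mulVec_smul])
  have hv0 : φ ⬝ᵥ B *ᵥ v ≠ 0 := fun hz => h0 (by simp [mulVec_smul, hz])
  refine ⟨k • χ, ?_⟩
  refine mul_left_cancel₀ hv0 ?_
  simp only [mulVec_smul, dotProduct_smul, smul_dotProduct, smul_eq_mul, hχ] at hk ⊢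
  linear_combination -hk

variable [DecidableEq ι] [IsDomain R] [IsPrincipalIdealRing R] {a b : ι} {p : R}

/-- If `B b a` is a maximal value divisible by `p`, then modulo `p` the columns of `B` other than
`b` are those of a scalar matrix. -/
lemma column_dvd (hab : a ≠ b) (h : IsMaximalValue B (Pi.single a 1) (Pi.single b 1))
    (hp : Prime p) (hpg : p ∣ B b a) {j : ι} (hja : j ≠ a) (hjb : j ≠ b) :
    (∀ i, i ≠ j → p ∣ B i j) ∧ p ∣ B a a - B j j := by
  have hcol : ∀ i, i ≠ a → p ∣ B i a := fun i hi => by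
    have := h.dvd_left (ψ := Pi.single i 1) (by simp [hi.symm])
    simp at this
    exact hpg.trans this
  have hrow := h.transpose.dvd_left (ψ := Pi.single j 1) (by simp [hjb.symm])
  simp at hrow
  obtain ⟨r, hr⟩ := hrow
  have key : ∀ l : R, l ∣ p → ∀ ψ : ι → R, ψ ⬝ᵥ (Pi.single a (l - r) + Pi.single j 1) = 0 →
      p ∣ ψ ⬝ᵥ B *ᵥ (Pi.single a (l - r) + Pi.single j 1) := fun l hl ψ hψ => by
    refine h.prime_dvd_left hp (by simpa using hpg) (ψ₁ := Pi.single b 1) ?_ hψ ?_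
    · simp [hab.symm, hjb.symm]
    · simp [mulVec_add, mulVec_single, hr]
      convert mul_dvd_mul_right hl (B b a) using 1
      ring
  have e1 := key 1 (one_dvd p) (Pi.single a 1 - Pi.single j (1 - r))
    (by simp [hja, hja.symm])
  have e2 := key p dvd_rfl (Pi.single a 1 - Pi.single j (p - r))
    (by simp [hja, hja.symm])
  simp [mulVec_add, mulVec_single, sub_dotProduct] at e1 e2
  obtain ⟨x, hx⟩ := hcol j hja
  obtain ⟨y1, e1⟩ := e1
  obtain ⟨y2, e2⟩ := e2
  rw [hx] at e1 e2
  have hd : p ∣ B a a - B j j := by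
    refine ⟨y1 - y2 + (1-r)^2 * x - (p - r)^2 * x + (B a a - B j j), ?_⟩
    linear_combination e1 - e2
  refine ⟨fun i hi => ?_, hd⟩
  by_cases hia : i = a
  · subst hia
    obtain ⟨z, hz⟩ := hd
    refine ⟨y2 + (p-r)^2 * x - (p - r) * z, ?_⟩
    linear_combination e2 - (p - r) * hz
  · have e3 := key p dvd_rfl (Pi.single i 1) (by simp [hi.symm, Ne.symm hia])
    simp [mulVec_add, mulVec_single] at e3
    exact (dvd_add_right ((hcol i hia).mul_right _)).1 e3

lemma entry_dvd (hab : a ≠ b) (h : IsMaximalValue B (Pi.single a 1) (Pi.single b 1))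
    (hp : Prime p) (hpg : p ∣ B b a) {c : ι} (hca : c ≠ a) (hcb : c ≠ b) :
    p ∣ B a b := by
  have hrow := h.transpose.dvd_left (ψ := Pi.single c 1) (by simp [hcb.symm])
  simp at hrow
  obtain ⟨r, hr⟩ := hrow
  let u : ι → R := Pi.single a (1 - r) + Pi.single c 1
  let ψ : ι → R := Pi.single a 1 - Pi.single c (1 - r)
  have hval : (Pi.single b 1 : ι → R) ⬝ᵥ B *ᵥ u = B b a := by
    simp [u, mulVec_add, mulVec_single, hr]; ring
  have hu : IsMaximalValue B u (Pi.single b 1) := by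
    refine ⟨by simp [u, hab.symm, hcb.symm], fun v χ hv => ?_⟩
    rw [hval]
    simpa using h.dvd_of_dvd v χ hv
  have hψ : ψ ⬝ᵥ u = 0 := by simp [ψ, u, hca, hca.symm]
  obtain ⟨s, hs⟩ := hu.dvd_left hψ
  rw [hval] at hs
  have key := h.transpose.prime_dvd_left hp (by simpa using hpg)
    (v := Pi.single b (p - s) + ψ) (ψ₁ := u) (ψ₂ := Pi.single b 1 - Pi.single a (p - s))
    (by rw [dotProduct_add, dotProduct_comm u ψ, hψ]; simp [u, hab.symm, hcb.symm])
    (by simp [ψ, hab, hab.symm, hcb, hca])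
    (by
      rw [mulVec_transpose, dotProduct_comm, ← dotProduct_mulVec, add_dotProduct, hs]
      have := congrArg ((p - s) * ·) hval
      simp only [single_dotProduct, one_mul] at this ⊢
      rw [this]
      simp; ring_nf; exact dvd_rfl)
  have h1 := h.column_dvd hab hp hpg hca hcb
  have h2 := h.transpose.column_dvd hab.symm hp hpg hcb hca
  simp [ψ, mulVec_add, mulVec_sub, mulVec_single, sub_dotProduct] at key
  obtain ⟨x1, h11⟩ := h1.2
  obtain ⟨x2, h22⟩ := h2.2
  obtain ⟨x3, h33⟩ := h2.1 b hcb.symm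
  obtain ⟨x4, h44⟩ := h2.1 a hca.symm
  simp only [transpose_apply] at h22 h33 h44
  obtain ⟨x5, h55⟩ := hpg
  obtain ⟨y, hy⟩ := key
  refine ⟨y - (B b b) + B a a + (p - s) ^ 2 * x5 + (1-r)*x3 - (p-s)*(1-r)*x4 + s * (x2 - x1), ?_⟩
  linear_combination hy + (p - s)^2 * h55 + (1 - r) * h33 - (p-s)*(1-r)*h44 + s * (h22 - h11)

/-- A maximal value at matrix position `(b, a)` divisible by `p` forces the matrix to be scalar
modulo `p` (if the size is at least three). -/
lemma scalar_mod (hab : a ≠ b) (h : IsMaximalValue B (Pi.single a 1) (Pi.single b 1))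
    (hp : Prime p) (hpg : p ∣ B b a) {c : ι} (hca : c ≠ a) (hcb : c ≠ b) (i j : ι) :
    p ∣ (B - B a a • (1 : Matrix ι ι R)) i j := by
  have hT := h.transpose
  by_cases hij : i = j
  · subst hij
    simp only [Matrix.sub_apply, Matrix.smul_apply, Matrix.one_apply_eq, smul_eq_mul, mul_one]
    rw [dvd_sub_comm]
    by_cases hia : i = a
    · simp [hia]
    · by_cases hib : i = b
      · subst hib
        have h1 := (h.column_dvd hab hp hpg hca hcb).2
        have h2 := (hT.column_dvd hab.symm hp hpg hcb hca).2
        simpa using dvd_sub h1 h2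
      · exact (h.column_dvd hab hp hpg hia hib).2
  · simp only [Matrix.sub_apply, Matrix.smul_apply, Matrix.one_apply_ne hij, smul_eq_mul,
      mul_zero, sub_zero]
    by_cases hja : j = a
    · subst hja
      have := h.dvd_left (ψ := Pi.single i 1) (by simp [Ne.symm hij])
      simp at this
      exact hpg.trans this
    by_cases hjb : j = b
    · subst hjb
      by_cases hia : i = a
      · subst hia
        exact h.entry_dvd hab hp hpg hca hcb
      · exact (hT.column_dvd hab.symm hp hpg hij hia).1 j (Ne.symm hij)
    · exact (h.column_dvd hab hp hpg hja hjb).1 i hij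

end IsMaximalValue

/-- A square matrix is cyclic if some vector lies in no proper invariant submodule. -/
def Matrix.IsCyclic {R ι : Type*} [CommRing R] [Fintype ι] (X : Matrix ι ι R) : Prop :=
  ∃ v : ι → R, ∀ S : Submodule R (ι → R), v ∈ S → (∀ w ∈ S, X *ᵥ w ∈ S) → S = ⊤

lemma Matrix.IsCyclic.conj {R ι : Type*} [CommRing R] [Fintype ι] [DecidableEq ι]
    {X P Q : Matrix ι ι R} (hX : X.IsCyclic) (hPQ : P * Q = 1) (hQP : Q * P = 1) :
    (P * X * Q).IsCyclic := by
  obtain ⟨v, hv⟩ := hX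
  refine ⟨P *ᵥ v, fun S hS hstable => ?_⟩
  have htop := hv (S.comap P.mulVecLin) hS fun w hw => by
    have := hstable _ hw
    simpa [Submodule.mem_comap, mulVec_mulVec, Matrix.mul_assoc, hQP] using this
  rw [eq_top_iff]
  intro w _
  have hw : Q *ᵥ w ∈ S.comap P.mulVecLin := htop ▸ Submodule.mem_top
  simpa [mulVec_mulVec, hPQ] using hw

lemma Matrix.IsCyclic.finrank_glCent {K : Type*} [Field K] {n : ℕ}
    {X : Matrix (Fin n) (Fin n) K} (hX : X.IsCyclic) : Module.finrank K (glCent X) = n := by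
  obtain ⟨v, hv⟩ := hX
  let f : glCent X →ₗ[K] (Fin n → K) := (mulVecBilin K K).flip v ∘ₗ (glCent X).subtype
  have hf : ∀ Z : glCent X, f Z = Z.1 *ᵥ v := fun Z => rfl
  have hcomm : ∀ Z : glCent X, X * Z.1 = Z.1 * X := fun Z => Z.2
  have hinj : Function.Injective f := by
    rw [← LinearMap.ker_eq_bot, LinearMap.ker_eq_bot']
    intro Z hZ
    have hker := hv (LinearMap.ker Z.1.mulVecLin) hZ fun w hw => by
      rw [LinearMap.mem_ker, mulVecLin_apply] at hw ⊢
      rw [mulVec_mulVec, ← hcomm, ← mulVec_mulVec, hw, mulVec_zero]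
    rw [LinearMap.ker_eq_top] at hker
    exact Subtype.ext (toLin'.injective (by rw [toLin'_apply', hker, ZeroMemClass.coe_zero,
      map_zero]))
  have hsurj : Function.Surjective f := by
    rw [← LinearMap.range_eq_top]
    refine hv _ ⟨⟨1, show X * 1 = 1 * X by simp⟩, by simp [hf]⟩ ?_
    rintro _ ⟨Z, rfl⟩
    refine ⟨⟨X * Z.1, ?_⟩, by rw [hf, hf, mulVec_mulVec]⟩
    change X * (X * Z.1) = X * Z.1 * X
    rw [Matrix.mul_assoc, hcomm]
  simpa using (LinearEquiv.ofBijective f ⟨hinj, hsurj⟩).finrank_eq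

/-- Vectors `u, w` with dual functionals `χ, φ` over a PID are the first two columns of an
invertible matrix whose inverse has `χ, φ` as its first two rows. -/
lemma exists_invertible_of_dual_pair {R : Type*} [CommRing R] [IsDomain R]
    [IsPrincipalIdealRing R] {k : ℕ} {u w χ φ : Fin (k + 2) → R} (hχu : χ ⬝ᵥ u = 1)
    (hχw : χ ⬝ᵥ w = 0) (hφu : φ ⬝ᵥ u = 0) (hφw : φ ⬝ᵥ w = 1) :
    ∃ P Q : Matrix (Fin (k + 2)) (Fin (k + 2)) R, P * Q = 1 ∧ Q * P = 1 ∧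
      P *ᵥ Pi.single 0 1 = u ∧ P *ᵥ Pi.single 1 1 = w ∧
      Pi.single 0 1 ᵥ* Q = χ ∧ Pi.single 1 1 ᵥ* Q = φ := by
  let O : Submodule R (Fin (k + 2) → R) := LinearMap.ker (dotProductBilin R R χ)
  let N : Submodule R (Fin (k + 2) → R) := O ⊓ LinearMap.ker (dotProductBilin R R φ)
  have hO : ∀ x, x ∈ O ↔ χ ⬝ᵥ x = 0 := fun x => by simp [O]
  have hN : ∀ x, x ∈ N ↔ χ ⬝ᵥ x = 0 ∧ φ ⬝ᵥ x = 0 := fun x => by simp [N, O]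
  obtain ⟨m, b⟩ := Submodule.basisOfPid (Pi.basisFun R (Fin (k + 2))) N
  let bO := b.mkFinConsOfLE w ((hO w).2 hχw) (inf_le_left : N ≤ O)
    (fun c x hx h => by
      have := congrArg (φ ⬝ᵥ ·) h
      simpa [dotProduct_add, hφw, ((hN x).1 hx).2] using this)
    (fun z hz => ⟨-(φ ⬝ᵥ z), (hN _).2 (by simp [dotProduct_add, hφw, hχw, (hO z).1 hz])⟩)
  let bV := bO.mkFinCons u
    (fun c x hx h => by
      have := congrArg (χ ⬝ᵥ ·) h
      simpa [dotProduct_add, hχu, (hO x).1 hx] using this)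
    (fun z => ⟨-(χ ⬝ᵥ z), (hO _).2 (by simp [dotProduct_add, hχu])⟩)
  obtain rfl : m = k := by
    have := Module.finrank_eq_card_basis bV
    simpa [eq_comm] using this
  have hb0 : bV 0 = u := by simp [bV]
  have hb1 : bV 1 = w := by
    rw [← Fin.succ_zero_eq_one]
    simp [bV, bO]
  have hbs : ∀ i : Fin m, bV i.succ.succ ∈ N := fun i => by
    simp [bV, bO]
  let P := (Pi.basisFun R (Fin (m + 2))).toMatrix bV
  let Q := bV.toMatrix (Pi.basisFun R (Fin (m + 2)))
  have hP : ∀ j, P *ᵥ Pi.single j 1 = bV j := fun j => by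
    ext i
    simp [P, Module.Basis.toMatrix_apply]
  have hPQ : P * Q = 1 := Module.Basis.toMatrix_mul_toMatrix_flip _ _
  have hrow : ∀ ψ : Fin (m + 2) → R, ∀ j, (ψ ᵥ* P) j = ψ ⬝ᵥ bV j := fun ψ j => by
    rw [← hP, dotProduct_mulVec]
    simp
  have hχ : χ ᵥ* P = Pi.single 0 1 := by
    ext j
    rw [hrow]
    refine Fin.cases (by simp [hb0, hχu]) (fun j => ?_) j
    refine Fin.cases (by simp [hb1, hχw]) (fun j => ?_) j
    simp [((hN _).1 (hbs j)).1]
  have hφ : φ ᵥ* P = Pi.single 1 1 := by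
    ext j
    rw [hrow]
    refine Fin.cases (by simp [hb0, hφu]) (fun j => ?_) j
    refine Fin.cases (by simp [hb1, hφw]) (fun j => ?_) j
    rw [((hN _).1 (hbs j)).2, Pi.single_eq_of_ne]
    simp [Fin.ext_iff]
  refine ⟨P, Q, hPQ, Module.Basis.toMatrix_mul_toMatrix_flip _ _, (hP 0).trans hb0,
    (hP 1).trans hb1, ?_, ?_⟩
  · rw [← hχ, vecMul_vecMul, hPQ, vecMul_one]
  · rw [← hφ, vecMul_vecMul, hPQ, vecMul_one]

lemma IsMaximalValue.conj {R ι : Type*} [CommRing R] [Fintype ι] [DecidableEq ι]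
    {B P Q : Matrix ι ι R} {v ψ : ι → R} (hQP : Q * P = 1)
    (h : IsMaximalValue B (P *ᵥ v) (ψ ᵥ* Q)) : IsMaximalValue (Q * B * P) v ψ := by
  have hval : ∀ x χ : ι → R, χ ⬝ᵥ (Q * B * P) *ᵥ x = (χ ᵥ* Q) ⬝ᵥ B *ᵥ (P *ᵥ x) := fun x χ => by
    simp only [dotProduct_mulVec, vecMul_vecMul, Matrix.mul_assoc]
  have hpair : ∀ x χ : ι → R, (χ ᵥ* Q) ⬝ᵥ (P *ᵥ x) = χ ⬝ᵥ x := fun x χ => by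
    rw [dotProduct_mulVec, vecMul_vecMul, hQP, vecMul_one]
  refine ⟨hpair v ψ ▸ h.orthogonal, fun x χ hx => ?_⟩
  rw [hval, hval]
  exact h.dvd_of_dvd _ _ (by rw [hpair, hx])

lemma eq_zero_of_orthogonal_values {R ι : Type*} [CommRing R] [Fintype ι] [DecidableEq ι]
    {B : Matrix ι ι R} {a : ι} (ha : B a a = 0)
    (h : ∀ v ψ : ι → R, ψ ⬝ᵥ v = 0 → ψ ⬝ᵥ B *ᵥ v = 0) : B = 0 := by
  have hoff : ∀ i j, i ≠ j → B i j = 0 := fun i j hij => by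
    simpa using h (Pi.single j 1) (Pi.single i 1) (by simp [hij])
  ext i j
  by_cases hij : i = j
  · subst hij
    by_cases hia : i = a
    · simpa [hia] using ha
    · have := h (Pi.single i 1 + Pi.single a 1) (Pi.single i 1 - Pi.single a 1)
        (by simp [hia, Ne.symm hia])
      simpa [mulVec_add, sub_dotProduct, ha, hoff i a hia, hoff a i (Ne.symm hia)] using this
  · exact hoff i j hij

/-- A matrix of size at least three whose entries generate the unit ideal, and with a zero on
the diagonal, takes the value `1` on an orthogonal pair. -/
lemma exists_orthogonal_value_eq_one {R : Type*} [CommRing R] [IsDomain R]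
    [IsPrincipalIdealRing R] {k : ℕ} {B : Matrix (Fin (k + 3)) (Fin (k + 3)) R}
    (h00 : B 0 0 = 0) (hB : ∀ p, (∀ i j, p ∣ B i j) → IsUnit p) :
    ∃ u φ : Fin (k + 3) → R, φ ⬝ᵥ u = 0 ∧ φ ⬝ᵥ B *ᵥ u = 1 := by
  obtain ⟨u, φ, h⟩ := IsMaximalValue.exists_pair B
  have hg : φ ⬝ᵥ B *ᵥ u ≠ 0 := fun hg => by
    have hB0 : B = 0 := eq_zero_of_orthogonal_values h00 fun v ψ hv => by
      simpa [hg] using h.dvd_of_dvd v ψ hv (by simp [hg])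
    exact not_isUnit_zero (hB 0 fun i j => by simp [hB0])
  suffices hunit : IsUnit (φ ⬝ᵥ B *ᵥ u) by
    obtain ⟨c, hc⟩ := hunit.exists_left_inv
    exact ⟨u, c • φ, by simp [h.orthogonal], by simpa using hc⟩
  obtain ⟨χ, hχ⟩ := h.exists_dual_of_ne_zero hg
  obtain ⟨w, hw⟩ := h.transpose.exists_dual_of_ne_zero (by
    rwa [mulVec_transpose, dotProduct_comm, ← dotProduct_mulVec])
  rw [dotProduct_comm] at hw
  obtain ⟨P, Q, hPQ, hQP, rfl, -, -, rfl⟩ := exists_invertible_of_dual_pair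
    (w := w - (χ ⬝ᵥ w) • u) hχ (by simp [dotProduct_sub, hχ]) h.orthogonal
    (by simp [dotProduct_sub, hw, h.orthogonal])
  have hval : (Q * B * P) 1 0 = (Pi.single 1 1 ᵥ* Q) ⬝ᵥ B *ᵥ P *ᵥ Pi.single 0 1 := by
    rw [dotProduct_mulVec, dotProduct_mulVec, vecMul_vecMul, vecMul_vecMul]
    simp [Matrix.mul_assoc]
  by_contra hn
  obtain ⟨p, hp, hpg⟩ := WfDvdMonoid.exists_irreducible_factor hn hg
  refine hp.not_isUnit (hB p ?_)
  have hdvd := (h.conj hQP).scalar_mod (by simp) hp.prime (hval ▸ hpg)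
    (c := ⟨2, by omega⟩) (by simp [Fin.ext_iff]) (by simp [Fin.ext_iff])
  choose C hC using hdvd
  set s := (Q * B * P) 0 0
  have hBeq : B = s • 1 + p • (P * of C * Q) := by
    have h1 : Q * B * P - s • 1 = p • of C := by
      ext i j
      simpa using hC i j
    calc B = (P * Q) * B * (P * Q) := by simp [hPQ]
      _ = P * (s • 1 + (Q * B * P - s • 1)) * Q := by simp only [add_sub_cancel, Matrix.mul_assoc]
      _ = _ := by
        rw [h1, Matrix.mul_add, Matrix.add_mul, Matrix.mul_smul, Matrix.smul_mul, Matrix.mul_one,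
          hPQ, Matrix.mul_smul, Matrix.smul_mul]
  have hs : p ∣ s := by
    have h2 := congrFun (congrFun hBeq 0) 0
    rw [h00] at h2
    simp only [Matrix.add_apply, Matrix.smul_apply, one_apply_eq, smul_eq_mul, mul_one] at h2
    exact (dvd_add_left (dvd_mul_right p _)).1 (h2 ▸ dvd_zero p)
  intro i j
  rw [hBeq]
  simp only [Matrix.add_apply, Matrix.smul_apply, smul_eq_mul]
  exact dvd_add (hs.mul_right _) (dvd_mul_right p _)

/-- Up to conjugation, every square matrix of size at least three over a PID has the form
`c + d B` where the first column of `B` is the second basis vector. -/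
lemma exists_conj_eq_scalar_add {R : Type*} [CommRing R] [IsDomain R] [IsPrincipalIdealRing R]
    {k : ℕ} (A : Matrix (Fin (k + 3)) (Fin (k + 3)) R) :
    ∃ (P Q B : Matrix (Fin (k + 3)) (Fin (k + 3)) R) (c d : R), P * Q = 1 ∧ Q * P = 1 ∧
      A = P * (c • 1 + d • B) * Q ∧ B *ᵥ Pi.single 0 1 = Pi.single 1 1 := by
  by_cases h0 : A = A 0 0 • 1
  · refine ⟨1, 1, single 1 0 1, A 0 0, 0, by simp, by simp, by simpa using h0, ?_⟩
    ext i
    simp [single_apply, Pi.single_apply, eq_comm]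
  obtain ⟨d, b, χ, hb, hχ⟩ := exists_eq_smul_unimodular
    (fun ij : Fin (k + 3) × Fin (k + 3) => (A - A 0 0 • 1) ij.1 ij.2) fun h => by
      refine h0 (sub_eq_zero.1 ?_)
      ext i j
      exact congrFun h (i, j)
  let B : Matrix (Fin (k + 3)) (Fin (k + 3)) R := of fun i j => b (i, j)
  have hA : A = A 0 0 • 1 + d • B := by
    rw [← sub_eq_iff_eq_add']
    ext i j
    exact congrFun hb (i, j)
  have hd : d ≠ 0 := by
    rintro rfl
    exact h0 (by simpa using hA)
  have h00 : B 0 0 = 0 := by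
    have := congrFun hb (0, 0)
    simpa [hd, B] using this.symm
  obtain ⟨u, φ, hφu, hφB⟩ := exists_orthogonal_value_eq_one h00 fun p hp => by
    refine isUnit_of_dvd_one (hχ ▸ Finset.dvd_sum fun ij _ => (hp ij.1 ij.2).mul_left _)
  obtain ⟨ψ, hψ⟩ : ∃ ψ : Fin (k + 3) → R, ψ ⬝ᵥ u = 1 := ⟨φ ᵥ* B, by rwa [← dotProduct_mulVec]⟩
  obtain ⟨P, Q, hPQ, hQP, hu, hw, -, -⟩ := exists_invertible_of_dual_pair
    (χ := ψ - (ψ ⬝ᵥ B *ᵥ u) • φ) (φ := φ) (u := u) (w := B *ᵥ u)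
    (by simp [sub_dotProduct, hψ, hφu]) (by simp [sub_dotProduct, hφB]) hφu hφB
  refine ⟨P, Q, Q * B * P, A 0 0, d, hPQ, hQP, ?_, ?_⟩
  · calc A = (P * Q) * (A 0 0 • 1 + d • B) * (P * Q) := by rw [hPQ]; simpa using hA
      _ = _ := by
        have hs : P * Q * (P * Q) = P * Q := by rw [hPQ, Matrix.one_mul]
        simp only [Matrix.mul_add, Matrix.add_mul, Matrix.mul_smul, Matrix.smul_mul,
          Matrix.mul_one, hs, Matrix.mul_assoc]
  · rw [← mulVec_mulVec, ← mulVec_mulVec, hu, ← hw, mulVec_mulVec, hQP, one_mulVec]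

/-- The companion matrix of `X ^ (r + 1) - q`. -/
def shiftMatrix {R : Type*} [CommRing R] (r : ℕ) (q : R) : Matrix (Fin (r + 1)) (Fin (r + 1)) R :=
  of (Fin.cons (Pi.single (Fin.last r) q) fun i => Pi.single i.castSucc 1)

namespace shiftMatrix

variable {R : Type*} [CommRing R] {r : ℕ} (q : R)

lemma mulVec_zero (x : Fin (r + 1) → R) : (shiftMatrix r q *ᵥ x) 0 = q * x (Fin.last r) := by
  simp [shiftMatrix, mulVec]

lemma mulVec_succ (x : Fin (r + 1) → R) (i : Fin r) :
    (shiftMatrix r q *ᵥ x) i.succ = x i.castSucc := by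
  simp [shiftMatrix, mulVec]

lemma mulVec_single_castSucc (i : Fin r) :
    shiftMatrix r q *ᵥ Pi.single i.castSucc 1 = Pi.single i.succ 1 := by
  ext j
  refine Fin.cases ?_ (fun j => ?_) j
  · simp [mulVec_zero, (Fin.castSucc_lt_last i).ne]
  · simp [mulVec_succ, Pi.single_apply]

lemma mulVec_single_last :
    shiftMatrix r q *ᵥ Pi.single (Fin.last r) 1 = Pi.single 0 q := by
  ext j
  refine Fin.cases ?_ (fun j => ?_) j
  · simp [mulVec_zero]
  · simp [mulVec_succ, (Fin.castSucc_lt_last j).ne]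

lemma vecMul_castSucc (x : Fin (r + 1) → R) (i : Fin r) :
    (x ᵥ* shiftMatrix r q) i.castSucc = x i.succ := by
  have h := congrArg (x ⬝ᵥ ·) (mulVec_single_castSucc q i)
  simpa only [dotProduct_mulVec, dotProduct_single, mul_one] using h

lemma vecMul_last (x : Fin (r + 1) → R) :
    (x ᵥ* shiftMatrix r q) (Fin.last r) = x 0 * q := by
  have h := congrArg (x ⬝ᵥ ·) (mulVec_single_last (r := r) q)
  simpa only [dotProduct_mulVec, dotProduct_single, mul_one] using h

lemma pow_mulVec (x : Fin (r + 1) → R) {i : ℕ} (hi : i ≤ r + 1) (j : Fin (r + 1)) :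
    (shiftMatrix r q ^ i *ᵥ x) j = if i ≤ j then x ⟨j - i, by omega⟩ else
      q * x (Fin.ofNat (r + 1) (j + (r + 1) - i)) := by
  induction i generalizing j with
  | zero => simp
  | succ i ih =>
    rw [pow_succ', ← mulVec_mulVec]
    refine Fin.cases ?_ (fun j => ?_) j
    · rw [mulVec_zero, ih (by omega), if_pos (by simpa using hi), if_neg (by simp)]
      congr 2
      ext
      simp only [Fin.val_last, Fin.ofNat, Fin.val_zero]
      rw [Nat.mod_eq_of_lt (by omega)]
      omega
    · rw [mulVec_succ, ih (by omega)]
      simp only [Fin.val_castSucc, Fin.val_succ, Nat.add_le_add_iff_right]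
      split_ifs
      · congr 2
        omega
      · congr 3
        omega

lemma pow_mulVec_last (x : Fin (r + 1) → R) (k : Fin (r + 1)) :
    (shiftMatrix r q ^ (r - k) *ᵥ x) (Fin.last r) = x k := by
  rw [pow_mulVec q x (by omega), if_pos (by simp)]
  congr 1
  ext
  simp only [Fin.val_last]
  omega

lemma pow_succ_mulVec_single_last (i : Fin r) :
    shiftMatrix r q ^ (i + 1 : ℕ) *ᵥ Pi.single (Fin.last r) 1 = Pi.single i.castSucc q := by
  ext j
  have hj := j.2
  have hi := i.2
  rw [pow_mulVec q _ (by omega)]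
  simp only [Pi.single_apply, Fin.ext_iff, Fin.val_last, Fin.val_castSucc, Fin.ofNat]
  by_cases h : (i + 1 : ℕ) ≤ j
  · rw [if_pos h, if_neg (by omega), if_neg (by omega)]
  · rw [if_neg h, Nat.mod_eq_of_lt (by omega)]
    by_cases h' : (j : ℕ) = i
    · rw [if_pos (by omega), if_pos h', mul_one]
    · rw [if_neg (by omega), if_neg h', mul_zero]

lemma trace_pow_succ (i : Fin r) : (shiftMatrix r q ^ (i + 1 : ℕ)).trace = 0 := by
  refine Finset.sum_eq_zero fun j _ => ?_
  have h : (shiftMatrix r q ^ (i + 1 : ℕ)) j j =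
      (shiftMatrix r q ^ (i + 1 : ℕ) *ᵥ Pi.single j 1) j := by simp
  have hj := j.2
  have hi := i.2
  rw [diag_apply, h, pow_mulVec q _ (by omega)]
  simp only [Pi.single_apply, Fin.ext_iff, Fin.ofNat]
  split_ifs with h1 h2 h3
  · omega
  · rfl
  · rw [Nat.mod_eq_of_lt (by omega)] at h3
    omega
  · simp

/-- A matrix orthogonal to all powers of the companion matrix is a commutator with it. -/
lemma exists_commutator_eq {N : Matrix (Fin (r + 1)) (Fin (r + 1)) R}
    (hN : ∀ i ≤ r, (shiftMatrix r q ^ i * N).trace = 0) :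
    ∃ Y, shiftMatrix r q * Y - Y * shiftMatrix r q = N := by
  let C := shiftMatrix r q
  let t : ℕ → Fin (r + 1) → R := fun k =>
    -∑ j : Fin (r + 1), if (j : ℕ) < k then C ^ (k - 1 - j) *ᵥ N.col j else 0
  have ht0 : t 0 = 0 := by simp [t]
  have htsucc : ∀ k : Fin (r + 1), t (k + 1) = C *ᵥ t k - N.col k := fun k => by
    have hterm : ∀ j : Fin (r + 1), (if (j : ℕ) < k + 1 then
        C ^ ((k : ℕ) + 1 - 1 - j) *ᵥ N.col j else 0) =
        C *ᵥ (if (j : ℕ) < k then C ^ ((k : ℕ) - 1 - j) *ᵥ N.col j else 0) +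
          if j = k then N.col k else 0 := fun j => by
      rcases lt_trichotomy j k with h | h | h
      · have h' : (j : ℕ) < k := h
        rw [if_pos (by omega), if_pos h', if_neg h.ne, mulVec_mulVec, ← pow_succ', add_zero]
        congr 2
        omega
      · subst h
        simp
      · have h' : (k : ℕ) < j := h
        rw [if_neg (by omega), if_neg (by omega), if_neg h.ne', Matrix.mulVec_zero, add_zero]
    simp only [t]
    rw [Finset.sum_congr rfl fun j _ => hterm j, Finset.sum_add_distrib, mulVec_neg, mulVec_sum]
    simp [sub_eq_add_neg, add_comm]
  have htop : t (r + 1) = 0 := by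
    ext j
    have hj := j.2
    rw [← pow_mulVec_last q (t (r + 1)) j, Pi.zero_apply]
    have h := hN (r - j) (by omega)
    rw [← neg_eq_zero, ← h, ← Pi.neg_apply, ← mulVec_neg]
    simp only [t, neg_neg, mulVec_sum, Finset.sum_apply]
    refine Finset.sum_congr rfl fun k _ => ?_
    rw [if_pos k.2, diag_apply, Nat.add_sub_cancel, mulVec_mulVec,
      (Commute.refl (shiftMatrix r q)).pow_pow .. |>.eq, ← mulVec_mulVec, pow_mulVec_last]
    rfl
  let Y : Matrix (Fin (r + 1)) (Fin (r + 1)) R := of fun i j => t j i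
  have hCY : ∀ i j, (C * Y) i j = t (j + 1) i + N i j := fun i j => by
    rw [htsucc]
    simp only [Pi.sub_apply, col_apply, sub_add_cancel]
    rfl
  have hYC : ∀ i j, (Y * C) i j = t (j + 1) i := fun i j => by
    change (Y i ᵥ* C) j = _
    refine Fin.lastCases ?_ (fun j => ?_) j
    · rw [vecMul_last]
      simp [Y, ht0, htop]
    · rw [vecMul_castSucc]
      rfl
  refine ⟨Y, ?_⟩
  ext i j
  rw [Matrix.sub_apply, hCY, hYC, add_sub_cancel_left]

end shiftMatrix

/-- The block matrix with corner `a`, remaining first row `w`, remaining first column `v`. -/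
def bordered {R : Type*} {m : ℕ} (a : R) (w v : Fin m → R) (M : Matrix (Fin m) (Fin m) R) :
    Matrix (Fin (m + 1)) (Fin (m + 1)) R :=
  of (Fin.cons (Fin.cons a w) fun i => Fin.cons (v i) (M i))

lemma bordered_mul {R : Type*} [CommRing R] {m : ℕ} (a a' : R) (w w' v v' : Fin m → R)
    (M M' : Matrix (Fin m) (Fin m) R) :
    bordered a w v M * bordered a' w' v' M' = bordered (a * a' + w ⬝ᵥ v') (a • w' + w ᵥ* M')
      (a' • v + M *ᵥ v') (vecMulVec v w' + M * M') := by
  ext i j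
  refine Fin.cases ?_ (fun i => ?_) i <;> refine Fin.cases ?_ (fun j => ?_) j <;>
    simp [bordered, mul_apply, Fin.sum_univ_succ, dotProduct, vecMul, mulVec, vecMulVec_apply,
      mul_comm]

lemma bordered_mulVec_cons {R : Type*} [CommRing R] {m : ℕ} (a s : R) (w v x : Fin m → R)
    (M : Matrix (Fin m) (Fin m) R) :
    bordered a w v M *ᵥ (Fin.cons s x : Fin (m + 1) → R) =
      (Fin.cons (a * s + w ⬝ᵥ x) (s • v + M *ᵥ x) : Fin (m + 1) → R) := by
  ext i
  refine Fin.cases ?_ (fun i => ?_) i <;>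
    simp [bordered, mulVec, dotProduct, Fin.sum_univ_succ, mul_comm]

lemma isCyclic_bordered_shiftMatrix {K : Type*} [Field K] {r : ℕ} {q : K} {y : Fin (r + 1) → K}
    (h : y (Fin.last r) ≠ 0 ∨ q ≠ 0) : (bordered 0 y 0 (shiftMatrix r q)).IsCyclic := by
  obtain ⟨s, hs⟩ : ∃ s, y (Fin.last r) - q * s ≠ 0 := by
    by_cases hy : y (Fin.last r) = 0
    · exact ⟨1, by simpa [hy] using h⟩
    · exact ⟨0, by simpa using hy⟩
  refine ⟨Fin.cons s (Pi.single 0 1), fun S hS hstable => ?_⟩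
  have hmem : ∀ i : Fin (r + 1), ∃ a : K, (Fin.cons a (Pi.single i 1) : Fin (r + 2) → K) ∈ S := by
    intro i
    induction i using Fin.induction with
    | zero => exact ⟨s, hS⟩
    | succ i ih =>
      obtain ⟨a, ha⟩ := ih
      have := hstable _ ha
      rw [bordered_mulVec_cons, shiftMatrix.mulVec_single_castSucc, smul_zero, zero_add] at this
      exact ⟨_, this⟩
  have hcorner : (Fin.cons 1 0 : Fin (r + 2) → K) ∈ S := by
    obtain ⟨a, ha⟩ := hmem (Fin.last r)
    have h1 := hstable _ ha
    rw [bordered_mulVec_cons, shiftMatrix.mulVec_single_last] at h1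
    have h2 := S.smul_mem (y (Fin.last r) - q * s)⁻¹ (S.sub_mem h1 (S.smul_mem q hS))
    convert h2 using 1
    ext i
    refine Fin.cases ?_ (fun i => ?_) i
    · simp [inv_mul_cancel₀ hs]
    · simp [Pi.single_apply]
  rw [eq_top_iff]
  intro x _
  choose a ha using hmem
  have hx : x = (x 0 - ∑ i, x i.succ * a i) • (Fin.cons 1 0 : Fin (r + 2) → K) +
      ∑ i : Fin (r + 1), x i.succ • (Fin.cons (a i) (Pi.single i 1) : Fin (r + 2) → K) := by
    ext j
    refine Fin.cases ?_ (fun j => ?_) j <;> simp [Finset.sum_apply, Pi.single_apply]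
  rw [hx]
  exact S.add_mem (S.smul_mem _ hcorner) (S.sum_mem fun i _ => S.smul_mem _ (ha i))

lemma shiftMatrix.map {R S : Type*} [CommRing R] [CommRing S] (f : R →+* S) (r : ℕ) (q : R) :
    (shiftMatrix r q).map f = shiftMatrix r (f q) := by
  ext i j
  refine Fin.cases ?_ (fun i => ?_) i <;> simp [shiftMatrix, Pi.single_apply, apply_ite f]

lemma bordered_map {R S : Type*} {m : ℕ} (f : R → S) (a : R) (w v : Fin m → R)
    (M : Matrix (Fin m) (Fin m) R) :
    (bordered a w v M).map f = bordered (f a) (f ∘ w) (f ∘ v) (M.map f) := by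
  ext i j
  refine Fin.cases ?_ (fun i => ?_) i <;> refine Fin.cases ?_ (fun j => ?_) j <;> simp [bordered]

/-- The equation for the large diagonal block of the commutator. -/
lemma exists_commutator_shiftMatrix_eq {R : Type*} [CommRing R] [IsDomain R] {r : ℕ} (g p q : R)
    (D : Matrix (Fin (r + 1)) (Fin (r + 1)) R)
    (htr : g * p + ((g * p) • (1 : Matrix (Fin (r + 1)) (Fin (r + 1)) R) + (g * q) • D).trace = 0) :
    ∃ (y : Fin (r + 1) → R) (Y : Matrix (Fin (r + 1)) (Fin (r + 1)) R), y (Fin.last r) = p ∧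
      shiftMatrix r q * Y - Y * shiftMatrix r q =
        (g * p) • 1 + (g * q) • D + vecMulVec (Pi.single (Fin.last r) g) y := by
  let y : Fin (r + 1) → R := Fin.snoc (fun i => -(shiftMatrix r q ^ (i + 1 : ℕ) * D).trace) p
  have hy : y (Fin.last r) = p := by simp [y]
  by_cases hg : g = 0
  · exact ⟨y, 0, hy, by simp [hg]⟩
  obtain ⟨Y, hY⟩ := shiftMatrix.exists_commutator_eq q
    (N := p • 1 + q • D + vecMulVec (Pi.single (Fin.last r) 1) y) fun i hi => by
      simp only [Matrix.mul_add, trace_add, Matrix.mul_smul, trace_smul, Matrix.mul_one,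
        mul_vecMulVec, trace_vecMulVec, smul_eq_mul]
      cases i with
      | zero =>
        refine mul_left_cancel₀ hg ?_
        simp only [trace_add, trace_smul, trace_one, smul_eq_mul] at htr
        simp only [pow_zero, trace_one, Matrix.one_mul, one_mulVec, single_dotProduct, hy]
        linear_combination htr
      | succ i =>
        have h1 := shiftMatrix.trace_pow_succ (r := r) q ⟨i, hi⟩
        have h2 := shiftMatrix.pow_succ_mulVec_single_last (r := r) q ⟨i, hi⟩
        simp only at h1 h2
        have h3 : y (Fin.castSucc ⟨i, hi⟩) = -(shiftMatrix r q ^ (i + 1) * D).trace := by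
          simp only [y, Fin.snoc_castSucc]
        rw [h1, h2, single_dotProduct, h3]
        ring
  refine ⟨y, g • Y, hy, ?_⟩
  rw [Matrix.mul_smul, Matrix.smul_mul, ← smul_sub, hY]
  ext i j
  simp [vecMulVec_apply, Pi.single_apply, mul_add, mul_assoc]

lemma exists_commutator_of_column {R : Type*} [CommRing R] [IsDomain R]
    [IsPrincipalIdealRing R] {k : ℕ} {c d : R} {B : Matrix (Fin (k + 3)) (Fin (k + 3)) R}
    (hB : B *ᵥ Pi.single 0 1 = Pi.single 1 1)
    (htr : (c • (1 : Matrix (Fin (k + 3)) (Fin (k + 3)) R) + d • B).trace = 0) :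
    ∃ X Y : Matrix (Fin (k + 3)) (Fin (k + 3)) R, X.trace = 0 ∧ X * Y - Y * X = c • 1 + d • B ∧
      ∀ p : Ideal R, p.IsMaximal → (X.map (Ideal.Quotient.mk p)).IsCyclic := by
  obtain ⟨g, p, q, rfl, rfl, hpq⟩ := exists_coprime_factorization c d
  let D : Matrix (Fin (k + 2)) (Fin (k + 2)) R := of fun i j => B i.succ j.succ
  let l : Fin (k + 2) → R := fun j => B 0 j.succ
  have hcol : ∀ i, B i 0 = (Pi.single 1 1 : Fin (k + 3) → R) i := fun i => by
    rw [← hB]; simp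
  have hblock : (g * p) • 1 + (g * q) • B = bordered (g * p) ((g * q) • l)
      (Pi.single 0 (g * q)) ((g * p) • 1 + (g * q) • D) := by
    ext i j
    refine Fin.cases ?_ (fun i => ?_) i <;> refine Fin.cases ?_ (fun j => ?_) j
    · simp [bordered, hcol]
    · simp [bordered, l, one_apply_ne (Fin.succ_ne_zero j).symm]
    · have h1 : i.succ = 1 ↔ i = 0 := by
        rw [← Fin.succ_zero_eq_one, Fin.succ_inj]
      simp [bordered, hcol, Pi.single_apply, h1]
    · simp [bordered, D, one_apply]
  rw [hblock] at htr ⊢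
  have htrace : ∀ (a : R) (w v : Fin (k + 2) → R) (M : Matrix (Fin (k + 2)) (Fin (k + 2)) R),
      (bordered a w v M).trace = a + M.trace := fun a w v M => by
    simp [trace, bordered, Fin.sum_univ_succ]
  rw [htrace] at htr
  obtain ⟨y, Y, hy, hY⟩ := exists_commutator_shiftMatrix_eq g p q D htr
  let s : Fin (k + 2) → R := y ᵥ* Y - (g * q) • l
  obtain ⟨a, b, hab⟩ := hpq
  let z := s (Fin.last _) * a
  let w : Fin (k + 2) → R :=
    Fin.cons (s (Fin.last _) * b) fun i => s i.castSucc - z * y i.castSucc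
  have hw : z • y + w ᵥ* shiftMatrix (k + 1) q = s := by
    ext j
    refine Fin.lastCases ?_ (fun j => ?_) j
    · simp only [Pi.add_apply, Pi.smul_apply, smul_eq_mul, shiftMatrix.vecMul_last, hy, w,
        Fin.cons_zero, z]
      linear_combination s (Fin.last _) * hab
    · simp [shiftMatrix.vecMul_castSucc, w]
  refine ⟨bordered 0 y 0 (shiftMatrix (k + 1) q), bordered z w (Pi.single (Fin.last _) g) Y,
    ?_, ?_, fun P hP => ?_⟩
  · rw [htrace, zero_add]
    simpa using shiftMatrix.trace_pow_succ (r := k + 1) q 0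
  · rw [bordered_mul, bordered_mul, hw]
    have hv : shiftMatrix (k + 1) q *ᵥ Pi.single (Fin.last _) g = Pi.single 0 (g * q) := by
      have := congrArg (g • ·) (shiftMatrix.mulVec_single_last (r := k + 1) q)
      simpa [← mulVec_smul, ← Pi.single_smul] using this
    have hD : (g * p) • 1 + (g * q) • D = shiftMatrix (k + 1) q * Y -
        (vecMulVec (Pi.single (Fin.last _) g) y + Y * shiftMatrix (k + 1) q) := by
      rw [add_comm (vecMulVec _ _), ← sub_sub, hY, add_sub_cancel_right]
    rw [hv, hD]
    ext i j
    refine Fin.cases ?_ (fun i => ?_) i <;> refine Fin.cases ?_ (fun j => ?_) j <;>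
      simp [bordered, s, hy, mul_comm]
  · let _ := Ideal.Quotient.field P
    rw [bordered_map, shiftMatrix.map, map_zero]
    have h0 : (Ideal.Quotient.mk P ∘ (0 : Fin (k + 2) → R)) = 0 := by ext; simp
    rw [h0]
    refine isCyclic_bordered_shiftMatrix ?_
    by_contra! hc
    have h1 := congrArg (Ideal.Quotient.mk P) hab
    rw [Function.comp_apply, hy] at hc
    simp [hc.1, hc.2] at h1

lemma exists_commutator_two {R : Type*} [CommRing R] [IsDomain R] [IsPrincipalIdealRing R]
    (A : Matrix (Fin 2) (Fin 2) R) (hA : A.trace = 0) :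
    ∃ X Y : Matrix (Fin 2) (Fin 2) R, X.trace = 0 ∧ X * Y - Y * X = A ∧
      ∀ p : Ideal R, p.IsMaximal → (X.map (Ideal.Quotient.mk p)).IsCyclic := by
  obtain ⟨g, y, z, hy, hz, s, t, hst⟩ := exists_coprime_factorization (A 0 1) (-A 1 0)
  rw [trace_fin_two] at hA
  refine ⟨!![0, y; z, 0], !![0, -(A 0 0 * t); A 0 0 * s, g], by simp [trace_fin_two], ?_,
    fun p hp => ?_⟩
  · ext i j
    fin_cases i <;> fin_cases j <;> simp
    · linear_combination A 0 0 * hst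
    · linear_combination -hy
    · linear_combination hz
    · linear_combination -A 0 0 * hst - hA
  · let _ := Ideal.Quotient.field p
    have hne : Ideal.Quotient.mk p y ≠ 0 ∨ Ideal.Quotient.mk p z ≠ 0 := by
      by_contra! hc
      have h1 := congrArg (Ideal.Quotient.mk p) hst
      simp [hc.1, hc.2] at h1
    have hmul : ∀ x, (!![0, y; z, 0].map (Ideal.Quotient.mk p)) *ᵥ x =
        ![Ideal.Quotient.mk p y * x 1, Ideal.Quotient.mk p z * x 0] := fun x => by
      ext i
      fin_cases i <;> simp [mulVec, dotProduct, Fin.sum_univ_two]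
    have htop : ∀ S : Submodule (R ⧸ p) (Fin 2 → R ⧸ p), ![1, 0] ∈ S → ![0, 1] ∈ S → S = ⊤ :=
      fun S h1 h2 => eq_top_iff.2 fun x _ => by
        have := S.add_mem (S.smul_mem (x 0) h1) (S.smul_mem (x 1) h2)
        convert this using 1
        ext i
        fin_cases i <;> simp
    rcases hne with hne | hne
    · refine ⟨![0, 1], fun S hS hstable => htop S ?_ hS⟩
      have := S.smul_mem (Ideal.Quotient.mk p y)⁻¹ (hstable _ hS)
      rw [hmul] at this
      simpa [inv_mul_cancel₀ hne] using this
    · refine ⟨![1, 0], fun S hS hstable => htop S hS ?_⟩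
      have := S.smul_mem (Ideal.Quotient.mk p z)⁻¹ (hstable _ hS)
      rw [hmul] at this
      simpa [inv_mul_cancel₀ hne] using this

lemma exists_commutator_add_three {R : Type*} [CommRing R] [IsDomain R] [IsPrincipalIdealRing R]
    {k : ℕ} (A : Matrix (Fin (k + 3)) (Fin (k + 3)) R) (hA : A.trace = 0) :
    ∃ X Y : Matrix (Fin (k + 3)) (Fin (k + 3)) R, X.trace = 0 ∧ X * Y - Y * X = A ∧
      ∀ p : Ideal R, p.IsMaximal → (X.map (Ideal.Quotient.mk p)).IsCyclic := by
  obtain ⟨P, Q, B, c, d, hPQ, hQP, rfl, hB⟩ := exists_conj_eq_scalar_add A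
  have htr : ∀ M : Matrix (Fin (k + 3)) (Fin (k + 3)) R, (P * M * Q).trace = M.trace :=
    fun M => by rw [trace_mul_comm, ← Matrix.mul_assoc, hQP, Matrix.one_mul]
  have hmul : ∀ M N : Matrix (Fin (k + 3)) (Fin (k + 3)) R,
      P * M * Q * (P * N * Q) = P * (M * N) * Q := fun M N => by
    calc _ = P * M * (Q * P) * N * Q := by simp only [Matrix.mul_assoc]
      _ = _ := by rw [hQP, Matrix.mul_one, Matrix.mul_assoc P]
  rw [htr] at hA
  obtain ⟨X, Y, hX, hXY, hcyc⟩ := exists_commutator_of_column hB hA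
  refine ⟨P * X * Q, P * Y * Q, by rw [htr, hX], ?_, fun p hp => ?_⟩
  · rw [hmul, hmul, ← Matrix.sub_mul, ← Matrix.mul_sub, hXY]
  · rw [Matrix.map_mul, Matrix.map_mul]
    refine (hcyc p hp).conj ?_ ?_
    · rw [← Matrix.map_mul, hPQ, Matrix.map_one _ (map_zero _) (map_one _)]
    · rw [← Matrix.map_mul, hQP, Matrix.map_one _ (map_zero _) (map_one _)]

/-- Over a PID `R`, every trace-zero matrix `A` (with `n ≥ 2`) is a commutator `[X, Y]` with
`X` trace zero and `Y` arbitrary, where `X` can be chosen so that its reduction mod every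
maximal ideal `p` is `gl_n(R/p)`-regular. -/
theorem trace_zero_is_commutator_glY {R : Type*} [CommRing R] [IsDomain R]
    [IsPrincipalIdealRing R] {n : ℕ} (hn : 2 ≤ n)
    (A : Matrix (Fin n) (Fin n) R) (hA : A.trace = 0) :
    ∃ X Y : Matrix (Fin n) (Fin n) R,
      X.trace = 0 ∧ X * Y - Y * X = A ∧
      ∀ (p : Ideal R), p.IsMaximal →
        Module.finrank (R ⧸ p) (glCent (X.map (Ideal.Quotient.mk p))) = n := by
  obtain ⟨X, Y, hX, hXY, hcyc⟩ : ∃ X Y : Matrix (Fin n) (Fin n) R, X.trace = 0 ∧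
      X * Y - Y * X = A ∧ ∀ p : Ideal R, p.IsMaximal →
        (X.map (Ideal.Quotient.mk p)).IsCyclic := by
    obtain ⟨k, rfl⟩ := Nat.exists_eq_add_of_le' hn
    cases k with
    | zero => exact exists_commutator_two A hA
    | succ k => exact exists_commutator_add_three A hA
  refine ⟨X, Y, hX, hXY, fun p hp => ?_⟩
  let _ := Ideal.Quotient.field p
  exact (hcyc p hp).finrank_glCent
end

section
/- Let R be a commutative principal ideal ring (commutative ring with identity, not necessarily a domain, in which every ideal is principal) and A ∈ sl_n(R) a trace-zero matrix with n ≥ 3. Then there exist trace-zero matrices X, Y ∈ sl_n(R) such that XY − YX = A. -/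
open Matrix

/-- Principal ideal rings are Hermite: any two elements have coprime cofactors with respect to
a suitable common divisor. -/
theorem exists_eq_mul_isCoprime {R : Type*} [CommRing R] [IsPrincipalIdealRing R] (a b : R) :
    ∃ g a' b' : R, a = g * a' ∧ b = g * b' ∧ IsCoprime a' b' := by
  let S : Set (Ideal R) :=
    {I | ∃ g x y : R, a = g * x ∧ b = g * y ∧ I = Ideal.span {x, y}}
  obtain ⟨_, ⟨g, x, y, hx, hy, rfl⟩, hmax⟩ :=
    WellFounded.has_min (wellFounded_gt (α := Ideal R)) S ⟨_, 1, a, b, by simp, by simp, rfl⟩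
  obtain ⟨c, hc⟩ := (IsPrincipalIdealRing.principal (Ideal.span {x, y})).principal
  change _ = Ideal.span {c} at hc
  obtain ⟨x', rfl⟩ : c ∣ x :=
    Ideal.mem_span_singleton.1 (hc ▸ Ideal.mem_span_pair.2 ⟨1, 0, by ring⟩)
  obtain ⟨y', rfl⟩ : c ∣ y :=
    Ideal.mem_span_singleton.1 (hc ▸ Ideal.mem_span_pair.2 ⟨0, 1, by ring⟩)
  have hle : Ideal.span {c * x', c * y'} ≤ Ideal.span {x', y'} := by
    rw [Ideal.span_le]
    rintro _ (rfl | rfl)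
    · exact Ideal.mem_span_pair.2 ⟨c, 0, by ring⟩
    · exact Ideal.mem_span_pair.2 ⟨0, c, by ring⟩
  have heq : Ideal.span {x', y'} = Ideal.span {c} := by
    rw [← hc]
    by_contra hne
    exact hmax _ ⟨g * c, x', y', by rw [hx]; ring, by rw [hy]; ring, rfl⟩
      (lt_of_le_of_ne hle (Ne.symm hne))
  obtain ⟨u, v, huv⟩ : ∃ u v, u * (c * x') + v * (c * y') = c :=
    Ideal.mem_span_pair.1 (hc ▸ Ideal.mem_span_singleton_self c)
  obtain ⟨x'', rfl⟩ : c ∣ x' :=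
    Ideal.mem_span_singleton.1 (heq ▸ Ideal.mem_span_pair.2 ⟨1, 0, by ring⟩)
  obtain ⟨y'', rfl⟩ : c ∣ y' :=
    Ideal.mem_span_singleton.1 (heq ▸ Ideal.mem_span_pair.2 ⟨0, 1, by ring⟩)
  -- `c * t` is an idempotent generating the same ideal as `c`
  obtain ⟨t, ht⟩ : ∃ t, c * c * t = c := ⟨u * x'' + v * y'', by linear_combination huv⟩
  refine ⟨g * c * (c * t), c * x'' + (1 - c * t), c * y'', ?_, ?_, ?_⟩
  · rw [hx]; linear_combination (-g * c * x'' + g * c * t) * ht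
  · rw [hy]; linear_combination (-g * c * y'') * ht
  · exact ⟨(1 - c * t) + c * t * u, c * t * v, by
      linear_combination (-x'' + t - u * t) * ht + t * huv⟩

theorem exists_linear_comb_dvd {R : Type*} [CommRing R] [IsPrincipalIdealRing R] (a b : R) :
    ∃ x y : R, x * a + y * b ∣ a ∧ x * a + y * b ∣ b := by
  obtain ⟨g, a', b', ha, hb, x, y, h⟩ := exists_eq_mul_isCoprime a b
  have : x * a + y * b = g := by rw [ha, hb]; linear_combination g * h
  exact ⟨x, y, this ▸ ⟨a', ha⟩, this ▸ ⟨b', hb⟩⟩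

section
variable {R ι : Type*} [CommRing R] [Fintype ι]

/-- The values `ℓ A v` with `ℓ` a unimodular row and `v` a column annihilated by `ℓ`: the
off-diagonal entries of the conjugates of `A`, up to multiples. -/
def offDiagonalValues (A : Matrix ι ι R) : Set R :=
  {c | ∃ l u v : ι → R, l ⬝ᵥ u = 1 ∧ l ⬝ᵥ v = 0 ∧ l ⬝ᵥ A *ᵥ v = c}

theorem exists_maximal_offDiagonalValues [Nontrivial ι] [IsNoetherianRing R] (A : Matrix ι ι R) :
    ∃ b ∈ offDiagonalValues A, ∀ c ∈ offDiagonalValues A, c ∣ b → b ∣ c := by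
  classical
  obtain ⟨o⟩ := (inferInstance : Nonempty ι)
  obtain ⟨_, ⟨b, hb, rfl⟩, hmax⟩ := WellFounded.has_min (wellFounded_gt (α := Ideal R))
    (Set.image (fun c => Ideal.span {c}) (offDiagonalValues A))
    ⟨_, 0, ⟨Pi.single o 1, Pi.single o 1, 0, by simp, by simp, by simp⟩, rfl⟩
  refine ⟨b, hb, fun c hc hcb => ?_⟩
  rw [← Ideal.span_singleton_le_span_singleton] at hcb ⊢
  by_contra h
  exact hmax _ ⟨c, hc, rfl⟩ (lt_of_le_not_ge hcb h)

theorem dvd_of_maximal [IsPrincipalIdealRing R] {A : Matrix ι ι R} {b : R}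
    (hb : ∀ c ∈ offDiagonalValues A, c ∣ b → b ∣ c) {l u v w : ι → R} (hu : l ⬝ᵥ u = 1)
    (hv : l ⬝ᵥ v = 0) (hlb : l ⬝ᵥ A *ᵥ v = b) (hw : l ⬝ᵥ w = 0) : b ∣ l ⬝ᵥ A *ᵥ w := by
  obtain ⟨x, y, hx, hy⟩ := exists_linear_comb_dvd b (l ⬝ᵥ A *ᵥ w)
  refine (hb _ ⟨l, u, x • v + y • w, hu, ?_, ?_⟩ hx).trans hy
  · simp [hv, hw]
  · simp [mulVec_add, mulVec_smul, hlb]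

theorem dvd_row_of_maximal [IsPrincipalIdealRing R] {A : Matrix ι ι R} {b : R}
    (hb : ∀ c ∈ offDiagonalValues A, c ∣ b → b ∣ c) {e f e' f' u : ι → R}
    (hee : e ⬝ᵥ e' = 1) (hef : e ⬝ᵥ f' = 0) (hfe : f ⬝ᵥ e' = 0) (hff : f ⬝ᵥ f' = 1)
    (heu : e ⬝ᵥ u = 0) (hfu : f ⬝ᵥ u = 0) (hAu : e ⬝ᵥ A *ᵥ u = b) (hAf : e ⬝ᵥ A *ᵥ f' = 0) :
    b ∣ f ⬝ᵥ A *ᵥ u ∧ b ∣ f ⬝ᵥ A *ᵥ e' ∧ b ∣ f ⬝ᵥ A *ᵥ f' - e ⬝ᵥ A *ᵥ e' ∧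
      ∀ z, e ⬝ᵥ z = 0 → f ⬝ᵥ z = 0 → e ⬝ᵥ A *ᵥ z = 0 → b ∣ f ⬝ᵥ A *ᵥ z := by
  have hfAu : b ∣ f ⬝ᵥ A *ᵥ u := by
    obtain ⟨g, m, p, hm, hp, x, y, hxy⟩ := exists_eq_mul_isCoprime b (f ⬝ᵥ A *ᵥ u)
    have hg : g ∈ offDiagonalValues A := by
      refine ⟨x • e + y • f, m • e' + p • f', u, ?_, ?_, ?_⟩
      · simp [hee, hef, hfe, hff]; linear_combination hxy
      · simp [heu, hfu]
      · simp [hAu]; rw [hp, hm]; linear_combination g * hxy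
    exact (hb g hg ⟨m, hm⟩).trans ⟨p, hp⟩
  obtain ⟨c, hc⟩ := hfAu
  -- the conjugates with first row `t • e + f`
  have hu : ∀ t : R, (t • e + f) ⬝ᵥ f' = 1 := fun t => by simp [hef, hff]
  have hv : ∀ t : R, (t • e + f) ⬝ᵥ u = 0 := fun t => by simp [heu, hfu]
  have hlu : ∀ t : R, (t • e + f) ⬝ᵥ A *ᵥ u = (t + c) * b := fun t => by
    simp [hAu, hc]; ring
  have hw : ∀ t : R, (t • e + f) ⬝ᵥ (e' - t • f') = 0 := fun t => by
    simp [hee, hef, hfe, hff]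
  have hlw : ∀ t : R, (t • e + f) ⬝ᵥ A *ᵥ (e' - t • f') =
      f ⬝ᵥ A *ᵥ e' - t * (f ⬝ᵥ A *ᵥ f' - e ⬝ᵥ A *ᵥ e') := fun t => by
    simp [mulVec_sub, mulVec_smul, hAf]; ring
  set x := f ⬝ᵥ A *ᵥ e'
  set y := f ⬝ᵥ A *ᵥ f' - e ⬝ᵥ A *ᵥ e'
  have hb1 : (((1 : R) - c) • e + f) ⬝ᵥ A *ᵥ u = b := by rw [hlu]; ring
  have hxy : b ∣ x - (1 - c) * y := by
    rw [← hlw]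
    exact dvd_of_maximal hb (hu _) (hv _) hb1 (hw _)
  obtain ⟨μ, hμ⟩ := hxy
  have hxc : b ∣ x + c * y := by
    obtain ⟨g, m, p, hm, hp, hmp⟩ := exists_eq_mul_isCoprime b (x + c * y)
    have hcop : IsCoprime (m * m) (p * (1 - m)) := by
      have h1 : IsCoprime m (1 - m) := ⟨1, 1, by ring⟩
      exact (hmp.mul_left hmp).mul_right (h1.mul_left h1)
    obtain ⟨s, r, hsr⟩ := hcop
    have hg : g ∈ offDiagonalValues A := by
      refine ⟨(m - c) • e + f, f', (s - r * μ) • u + r • (e' - (m - c) • f'), hu _, ?_, ?_⟩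
      · rw [dotProduct_add, dotProduct_smul, dotProduct_smul, hv, hw]; simp
      · rw [mulVec_add, mulVec_smul, mulVec_smul, dotProduct_add, dotProduct_smul,
          dotProduct_smul, hlu, hlw, smul_eq_mul, smul_eq_mul]
        linear_combination g * hsr + r * m * hμ + (r - r * m) * hp + s * m * hm
    exact (hb g hg ⟨m, hm⟩).trans ⟨p, hp⟩
  have hy : b ∣ y := (dvd_sub hxc ⟨μ, hμ⟩).trans (dvd_of_eq (by ring))
  refine ⟨⟨c, hc⟩, ?_, hy, fun z hez hfz hAz => ?_⟩
  · exact (dvd_sub hxc (hy.mul_left c)).trans (dvd_of_eq (by ring))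
  · have := dvd_of_maximal hb (hu (1 - c)) (hv _) hb1 (w := z) (by simp [hez, hfz])
    simpa [hAz] using this

variable [DecidableEq ι]

theorem exists_units_vecMul_pair {r : ι → R} [IsPrincipalIdealRing R] {i j : ι} (hij : i ≠ j) :
    ∃ Q : (Matrix ι ι R)ˣ, (r ᵥ* Q.1) j = 0 ∧ (∀ k, k ≠ i → k ≠ j → (r ᵥ* Q.1) k = r k) ∧
      ∀ k, k ≠ i → k ≠ j → Pi.single k 1 ᵥ* Q.1 = Pi.single k 1 := by
  obtain ⟨g, a, d, ha, hd, x, y, hxy⟩ := exists_eq_mul_isCoprime (r i) (r j)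
  have key : ∀ x y a d : R, x * a + y * d = 1 →
      (1 + single i i (x - 1) + single j i y + single i j (-d) + single j j (a - 1)) *
      (1 + single i i (a - 1) + single j i (-y) + single i j d + single j j (x - 1)) =
        (1 : Matrix ι ι R) := by
    intro x y a d h
    have hne : ∀ (p q : ι) (c c' : R), single p i c * single j q c' = 0 ∧
        single p j c * single i q c' = 0 := fun p q c c' =>
      ⟨Matrix.single_mul_single_of_ne c p i j hij c',
        Matrix.single_mul_single_of_ne c p j i hij.symm c'⟩
    simp only [mul_add, add_mul, one_mul, mul_one, single_mul_single_same, (hne _ _ _ _).1,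
      (hne _ _ _ _).2]
    ext k l
    simp only [Matrix.add_apply, Matrix.single_apply, Matrix.zero_apply]
    by_cases hki : i = k <;> by_cases hkj : j = k <;> by_cases hli : i = l <;>
      by_cases hlj : j = l <;> simp [hki, hkj, hli, hlj] <;> grind
  have hv : ∀ (v : ι → R) (p q : ι) (c : R), v ᵥ* single p q c = Pi.single q (v p * c) := by
    intro v p q c
    ext l
    simp [vecMul, dotProduct, Matrix.single_apply, Pi.single_apply, Finset.sum_ite_eq,
      ite_and, eq_comm]
  refine ⟨⟨_, _, key x y a d hxy, ?_⟩, ?_, ?_, ?_⟩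
  · have := key a (-y) x (-d) (by linear_combination hxy)
    simpa using this
  · simp only [vecMul_add, hv, vecMul_one, Pi.add_apply, Pi.single_apply, hij.symm]
    simp
    rw [ha, hd]; ring
  · intro k hi hj
    simp [vecMul_add, hv, hi, hj]
  · intro k hi hj
    simp [vecMul_add, hv, hi.symm, hj.symm]

/-- The entries of a row at the indices in `s` can be cleared into the entry at `i` by an
invertible matrix that fixes all other coordinates. -/
theorem exists_units_vecMul_eq_zero [IsPrincipalIdealRing R] (r : ι → R) (i : ι) (s : Finset ι)
    (hi : i ∉ s) :
    ∃ Q : (Matrix ι ι R)ˣ, (∀ j ∈ s, (r ᵥ* Q.1) j = 0) ∧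
      ∀ k, k ≠ i → k ∉ s → Pi.single k 1 ᵥ* Q.1 = Pi.single k 1 := by
  induction s using Finset.induction_on with
  | empty => exact ⟨1, by simp, by simp⟩
  | insert j s hj ih =>
    rw [Finset.mem_insert, not_or] at hi
    obtain ⟨Q, hQ, hQ'⟩ := ih hi.2
    obtain ⟨M, hMj, hM, hM'⟩ := exists_units_vecMul_pair (r := r ᵥ* Q.1) hi.1
    refine ⟨Q * M, ?_, ?_⟩
    · intro k hk
      rw [Units.val_mul, ← vecMul_vecMul]
      rcases Finset.mem_insert.1 hk with rfl | hks
      · exact hMj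
      · rw [hM k (by rintro rfl; exact hi.2 hks) (by rintro rfl; exact hj hks), hQ k hks]
    · intro k hki hk
      rw [Finset.mem_insert, not_or] at hk
      rw [Units.val_mul, ← vecMul_vecMul, hQ' k hki hk.2, hM' k hki hk.1]

theorem offDiagonalValues_conj (A : Matrix ι ι R) (Q : (Matrix ι ι R)ˣ) :
    offDiagonalValues (Q⁻¹.1 * A * Q.1) ⊆ offDiagonalValues A := by
  rintro c ⟨l, u, v, hu, hv, rfl⟩
  refine ⟨l ᵥ* Q⁻¹.1, Q.1 *ᵥ u, Q.1 *ᵥ v, ?_, ?_, ?_⟩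
  · simpa [← dotProduct_mulVec] using hu
  · simpa [← dotProduct_mulVec] using hv
  · simp [← dotProduct_mulVec, mulVec_mulVec, Matrix.mul_assoc]

theorem dvd_sub_scalar_of_maximal [IsPrincipalIdealRing R] {A : Matrix ι ι R} {b : R}
    (hb : ∀ c ∈ offDiagonalValues A, c ∣ b → b ∣ c) {o p q : ι} (hop : o ≠ p) (hoq : o ≠ q)
    (hpq : p ≠ q) (hAp : A o p = b) (hA : ∀ j, j ≠ o → j ≠ p → A o j = 0) (i j : ι) :
    b ∣ (A - scalar ι (A o o)) i j := by
  have row : ∀ k, k ≠ o → k ≠ p → b ∣ A k p ∧ b ∣ A k o ∧ b ∣ A k k - A o o ∧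
      ∀ j, j ≠ o → j ≠ p → j ≠ k → b ∣ A k j := by
    intro k hko hkp
    obtain ⟨h1, h2, h3, h4⟩ := dvd_row_of_maximal hb (e := Pi.single o 1) (f := Pi.single k 1)
      (e' := Pi.single o 1) (f' := Pi.single k 1) (u := Pi.single p 1) (by simp)
      (by simp [hko.symm]) (by simp [hko]) (by simp) (by simp [hop]) (by simp [hkp])
      (by simpa using hAp) (by simpa using hA k hko hkp)
    refine ⟨by simpa using h1, by simpa using h2, by simpa using h3, fun j hjo hjp hjk => ?_⟩
    simpa using h4 (Pi.single j 1) (by simp [hjo.symm]) (by simp [hjk.symm])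
      (by simpa using hA j hjo hjp)
  obtain ⟨h1, h2, h3, h4⟩ := dvd_row_of_maximal hb (e := Pi.single o 1)
      (f := Pi.single p 1 + Pi.single q 1)
      (e' := Pi.single o 1) (f' := Pi.single q 1) (u := Pi.single p 1 - Pi.single q 1) (by simp)
      (by simp [hoq]) (by simp [hop.symm, hoq.symm]) (by simp [hpq]) (by simp [hop, hoq])
      (by simp [hpq, hpq.symm])
      (by simpa [mulVec_sub, hA q hoq.symm hpq.symm] using hAp)
      (by simpa using hA q hoq.symm hpq.symm)
  obtain ⟨r1, r2, r3, r4⟩ := row q hoq.symm hpq.symm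
  simp [mulVec_sub] at h1 h2 h3
  have hpo : b ∣ A p o := (dvd_add_left r2).1 h2
  have hpq' : b ∣ A p q := (dvd_sub h3 r3).trans (dvd_of_eq (by ring))
  have hpp : b ∣ A p p - A o o :=
    (dvd_add (dvd_sub (dvd_add h1 hpq') r1) r3).trans (dvd_of_eq (by ring))
  have hpj : ∀ j, j ≠ o → j ≠ p → j ≠ q → b ∣ A p j := by
    intro j hjo hjp hjq
    have h := h4 (Pi.single j 1) (by simp [hjo.symm]) (by simp [hjp.symm, hjq.symm])
      (by simpa using hA j hjo hjp)
    simp at h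
    exact (dvd_add_left (r4 j hjo hjp hjq)).1 h
  rw [Matrix.sub_apply, scalar_apply, diagonal_apply]
  split_ifs with hij
  · subst hij
    by_cases hio : i = o
    · simp [hio]
    by_cases hip : i = p
    · exact hip ▸ hpp
    exact (row i hio hip).2.2.1
  · rw [sub_zero]
    by_cases hio : i = o
    · subst hio
      by_cases hjp : j = p
      · rw [hjp, hAp]
      · rw [hA j (Ne.symm hij) hjp]
        exact dvd_zero b
    by_cases hjo : j = o
    · by_cases hip : i = p
      · rwa [hip, hjo]
      · exact hjo ▸ (row i hio hip).2.1
    by_cases hip : i = p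
    · subst hip
      by_cases hjq : j = q
      · rwa [hjq]
      · exact hpj j hjo (Ne.symm hij) hjq
    by_cases hjp : j = p
    · exact hjp ▸ (row i hio hip).1
    · exact (row i hio hip).2.2.2 j hjo hjp (Ne.symm hij)

/-- Every matrix of size at least three over a principal ideal ring is conjugate to one whose row
`o` vanishes off the entries `o` and `p`, and which is scalar modulo its entry at `(o, p)`. -/
theorem exists_conj_scalar_mod [IsPrincipalIdealRing R] (A : Matrix ι ι R) {o p q : ι}
    (hop : o ≠ p) (hoq : o ≠ q) (hpq : p ≠ q) :
    ∃ Q : (Matrix ι ι R)ˣ, ∃ B : Matrix ι ι R,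
      Q⁻¹.1 * A * Q.1 = B ∧ (∀ j, j ≠ o → j ≠ p → B o j = 0) ∧
        ∀ i j, B o p ∣ (B - scalar ι (B o o)) i j := by
  have : Nontrivial ι := ⟨o, p, hop⟩
  obtain ⟨b, ⟨l, u, v, hu, hv, hlv⟩, hmax⟩ := exists_maximal_offDiagonalValues A
  obtain ⟨Q, hQ, -⟩ := exists_units_vecMul_eq_zero l o (Finset.univ.erase o) (by simp)
  obtain ⟨S, hS, hSo⟩ := exists_units_vecMul_eq_zero ((Q⁻¹.1 * A * Q.1) o) p
    ((Finset.univ.erase p).erase o) (by simp)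
  set C := Q⁻¹.1 * A * Q.1 with hC
  have hB : (Q * S)⁻¹.1 * A * (Q * S).1 = S⁻¹.1 * C * S.1 := by
    simp [hC, _root_.mul_inv_rev, Matrix.mul_assoc]
  set B := S⁻¹.1 * C * S.1 with hB'
  have hBA : offDiagonalValues B ⊆ offDiagonalValues A := hB ▸ offDiagonalValues_conj A (Q * S)
  replace hSo : Pi.single o 1 ᵥ* S.1 = Pi.single o 1 := hSo o hop (by simp)
  have hSo' : Pi.single o 1 ᵥ* S⁻¹.1 = Pi.single o 1 := by
    conv_lhs => rw [← hSo, vecMul_vecMul, Units.mul_inv, vecMul_one]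
  have hBo : B o = C o ᵥ* S.1 := by
    have h : Pi.single o 1 ᵥ* B = Pi.single o 1 ᵥ* C ᵥ* S.1 := by
      rw [hB', ← vecMul_vecMul, ← vecMul_vecMul, hSo']
    simpa [Matrix.row] using h
  have hBz : ∀ j, j ≠ o → j ≠ p → B o j = 0 := fun j hjo hjp => by
    rw [hBo]
    exact hS j (by simp [hjo, hjp])
  have hl : l ᵥ* Q.1 = Pi.single o ((l ᵥ* Q.1) o) := by
    ext j
    by_cases hj : j = o
    · simp [hj]
    · rw [hQ j (by simp [hj])]
      simp [hj]
  set g := (l ᵥ* Q.1) o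
  have hlQ : ∀ w, l ⬝ᵥ w = g * (Q⁻¹.1 *ᵥ w) o := fun w => by
    rw [← single_dotProduct, ← hl, ← dotProduct_mulVec, mulVec_mulVec, Units.mul_inv, one_mulVec]
  have hvo : (Q⁻¹.1 *ᵥ v) o = 0 := by
    rw [hlQ] at hu hv
    calc (Q⁻¹.1 *ᵥ v) o = g * (Q⁻¹.1 *ᵥ u) o * (Q⁻¹.1 *ᵥ v) o := by rw [hu, one_mul]
      _ = (Q⁻¹.1 *ᵥ u) o * (g * (Q⁻¹.1 *ᵥ v) o) := by ring
      _ = 0 := by rw [hv, mul_zero]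
  set x := S⁻¹.1 *ᵥ (Q⁻¹.1 *ᵥ v) with hx
  have hxo : x o = 0 := by
    have h : Pi.single o 1 ⬝ᵥ x = Pi.single o 1 ⬝ᵥ (Q⁻¹.1 *ᵥ v) := by
      rw [hx, dotProduct_mulVec, hSo']
    rwa [single_one_dotProduct, single_one_dotProduct, hvo] at h
  have hBb : B o p ∣ b := by
    have h1 : (Q⁻¹.1 *ᵥ (A *ᵥ v)) o = B o ⬝ᵥ x := by
      rw [hBo, hx, ← dotProduct_mulVec, mulVec_mulVec (M := S.1), Units.mul_inv, one_mulVec]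
      change _ = (C *ᵥ (Q⁻¹.1 *ᵥ v)) o
      simp [hC, mulVec_mulVec, Matrix.mul_assoc]
    have h2 : B o ⬝ᵥ x = B o p * x p := by
      refine Finset.sum_eq_single p (fun j _ hjp => ?_) (by simp)
      by_cases hjo : j = o
      · rw [hjo, hxo, mul_zero]
      · rw [hBz j hjo hjp, zero_mul]
    rw [← hlv, hlQ, h1, h2]
    exact ((dvd_refl _).mul_right _).mul_left _
  have hbB : b ∣ B o p := by
    refine hmax _ (hBA ⟨Pi.single o 1, Pi.single o 1, Pi.single p 1, ?_, ?_, ?_⟩) hBb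
    · simp
    · simp [hop]
    · simp
  exact ⟨Q * S, B, hB, hBz, dvd_sub_scalar_of_maximal
    (fun c hc hcB => hBb.trans (hmax c (hBA hc) (hcB.trans hBb))) hop hoq hpq rfl hBz⟩

end

section
variable {R : Type*} [CommRing R]

/-- The companion matrix of `t ^ (k + 1) - b`. -/
def cyclicShift (k : ℕ) (b : R) : Matrix (Fin (k + 1)) (Fin (k + 1)) R :=
  of (Fin.snoc (α := fun _ => Fin (k + 1) → R) (fun i => Pi.single i.succ 1) (Pi.single 0 b))

theorem cyclicShift_castSucc (k : ℕ) (b : R) (i : Fin k) :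
    cyclicShift k b i.castSucc = Pi.single i.succ 1 :=
  Fin.snoc_castSucc (α := fun _ => Fin (k + 1) → R) (Pi.single 0 b)
    (fun i => Pi.single i.succ 1) i

theorem cyclicShift_last (k : ℕ) (b : R) :
    cyclicShift k b (Fin.last k) = Pi.single 0 b :=
  Fin.snoc_last (α := fun _ => Fin (k + 1) → R) (Pi.single 0 b) fun i => Pi.single i.succ 1

theorem cyclicShift_mulVec_castSucc {k : ℕ} (b : R) (z : Fin (k + 1) → R) (i : Fin k) :
    (cyclicShift k b *ᵥ z) i.castSucc = z i.succ := by
  simp [mulVec, cyclicShift_castSucc]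

theorem cyclicShift_mulVec_last {k : ℕ} (b : R) (z : Fin (k + 1) → R) :
    (cyclicShift k b *ᵥ z) (Fin.last k) = b * z 0 := by
  simp [mulVec, cyclicShift_last]

theorem vecMul_cyclicShift_zero {k : ℕ} (b : R) (z : Fin (k + 1) → R) :
    (z ᵥ* cyclicShift k b) 0 = b * z (Fin.last k) := by
  simp [vecMul, dotProduct, Fin.sum_univ_castSucc, cyclicShift_castSucc, cyclicShift_last, mul_comm]

theorem vecMul_cyclicShift_succ {k : ℕ} (b : R) (z : Fin (k + 1) → R) (j : Fin k) :
    (z ᵥ* cyclicShift k b) j.succ = z j.castSucc := by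
  simp [vecMul, dotProduct, Fin.sum_univ_castSucc, cyclicShift_castSucc, cyclicShift_last,
    Pi.single_apply]

theorem cyclicShift_mul_castSucc {k : ℕ} (b : R) (Z : Matrix (Fin (k + 1)) (Fin (k + 1)) R)
    (i : Fin k) (j : Fin (k + 1)) : (cyclicShift k b * Z) i.castSucc j = Z i.succ j :=
  cyclicShift_mulVec_castSucc b (fun l => Z l j) i

theorem cyclicShift_mul_last {k : ℕ} (b : R) (Z : Matrix (Fin (k + 1)) (Fin (k + 1)) R)
    (j : Fin (k + 1)) : (cyclicShift k b * Z) (Fin.last k) j = b * Z 0 j :=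
  cyclicShift_mulVec_last b (fun l => Z l j)

theorem mul_cyclicShift_zero {k : ℕ} (b : R) (Z : Matrix (Fin (k + 1)) (Fin (k + 1)) R)
    (i : Fin (k + 1)) : (Z * cyclicShift k b) i 0 = b * Z i (Fin.last k) :=
  vecMul_cyclicShift_zero b (Z i)

theorem mul_cyclicShift_succ {k : ℕ} (b : R) (Z : Matrix (Fin (k + 1)) (Fin (k + 1)) R)
    (i : Fin (k + 1)) (j : Fin k) : (Z * cyclicShift k b) i j.succ = Z i j.castSucc :=
  vecMul_cyclicShift_succ b (Z i) j

theorem trace_cyclicShift (k : ℕ) (b : R) : (cyclicShift (k + 1) b).trace = 0 := by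
  simp [trace, Fin.sum_univ_castSucc (n := k + 1), cyclicShift_castSucc, cyclicShift_last,
    Fin.ext_iff]

/-- Modulo matrices supported on the last row, everything is a commutator with `cyclicShift`. -/
theorem exists_commutator_cyclicShift_eq_sub {k : ℕ} (b : R)
    (B : Matrix (Fin (k + 1)) (Fin (k + 1)) R) :
    ∃ (W : Matrix (Fin (k + 1)) (Fin (k + 1)) R) (T : Fin (k + 1) → R),
      cyclicShift k b * W - W * cyclicShift k b = B - vecMulVec (Pi.single (Fin.last k) 1) T := by
  let W : Matrix (Fin (k + 1)) (Fin (k + 1)) R := of fun i =>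
    Fin.induction (motive := fun _ => Fin (k + 1) → R) 0
      (fun i z => z ᵥ* cyclicShift k b + B i.castSucc) i
  have h0 : W 0 = 0 := rfl
  have hs : ∀ i : Fin k, W i.succ = W i.castSucc ᵥ* cyclicShift k b + B i.castSucc :=
    fun i => rfl
  refine ⟨W, B (Fin.last k) + W (Fin.last k) ᵥ* cyclicShift k b, ?_⟩
  ext i j
  have hmul : ∀ i, (W * cyclicShift k b) i j = (W i ᵥ* cyclicShift k b) j := fun i => rfl
  refine Fin.lastCases ?_ (fun i => ?_) i
  · simp [cyclicShift_mul_last, h0, vecMulVec_apply, hmul]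
  · simp [cyclicShift_mul_castSucc, hs, vecMulVec_apply, hmul, Fin.castSucc_ne_last]

theorem exists_commutator_cyclicShift_eq_scalar (k : ℕ) (b : R) :
    ∃ D : Matrix (Fin (k + 2)) (Fin (k + 2)) R,
      cyclicShift (k + 1) b * D - D * cyclicShift (k + 1) b =
        1 - single (Fin.last (k + 1)) (Fin.last (k + 1)) (k + 2 : R) ∧ D.trace = 0 ∧
      ∀ w : Fin (k + 2) → R, (D *ᵥ w) (Fin.last (k + 1)) = (k + 1) * w (Fin.last k).castSucc := by
  refine ⟨of fun i j => if (j : ℕ) + 1 = i then ((i : ℕ) : R) else 0, ?_, ?_, ?_⟩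
  · ext i j
    refine Fin.lastCases ?_ (fun i => ?_) i <;> refine Fin.cases ?_ (fun j => ?_) j
    · simp only [Matrix.sub_apply, cyclicShift_mul_last, mul_cyclicShift_zero, Matrix.one_apply,
        Matrix.single_apply, of_apply, Fin.ext_iff, Fin.val_last, Fin.val_zero]
      grind
    · simp only [Matrix.sub_apply, cyclicShift_mul_last, mul_cyclicShift_succ, Matrix.one_apply,
        Matrix.single_apply, of_apply,
        Fin.ext_iff, Fin.val_last, Fin.val_succ, Fin.val_castSucc, Fin.val_zero]
      grind
    · simp only [Matrix.sub_apply, cyclicShift_mul_castSucc, mul_cyclicShift_zero, Matrix.one_apply,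
        Matrix.single_apply, of_apply,
        Fin.ext_iff, Fin.val_last, Fin.val_succ, Fin.val_castSucc, Fin.val_zero]
      have hi : k + 1 + 1 ≠ (i : ℕ) := by omega
      by_cases h : (i : ℕ) = 0 <;> simp [h, hi]
    · simp only [Matrix.sub_apply, cyclicShift_mul_castSucc, mul_cyclicShift_succ, Matrix.one_apply,
        Matrix.single_apply, of_apply, Fin.ext_iff, Fin.val_last, Fin.val_succ, Fin.val_castSucc]
      grind
  · simp [trace]
  · intro w
    simp only [mulVec, dotProduct, of_apply]
    rw [Finset.sum_eq_single (Fin.last k).castSucc]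
    · simp
    · intro j _ hj
      rw [if_neg, zero_mul]
      intro h
      exact hj (Fin.ext (by simpa using h))
    · simp

theorem exists_commutator_cyclicShift_eq_border {k : ℕ} (b : R) (ω : ℕ → R) :
    ∃ V : Matrix (Fin (k + 2)) (Fin (k + 2)) R,
      (∀ i j, (cyclicShift (k + 1) b * V - V * cyclicShift (k + 1) b) i j =
        if i = Fin.last (k + 1) then (if j = Fin.last (k + 1) then 0 else - b * ω (k - j))
        else if j = Fin.last (k + 1) then ω i else 0) ∧ V.trace = ω k ∧
      ∀ w : Fin (k + 2) → R,
        b ∣ (V *ᵥ w) (Fin.last (k + 1)) - ω k * w (Fin.last (k + 1)) := by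
  refine ⟨of fun i j => if j = Fin.last (k + 1) then (if i = 0 then 0 else ω (i - 1))
    else if (j : ℕ) + 2 ≤ i then b * ω (i - 2 - j) else 0, ?_, ?_, ?_⟩
  · intro i j
    refine Fin.lastCases ?_ (fun i => ?_) i <;> refine Fin.cases ?_ (fun j => ?_) j
    · simp only [Matrix.sub_apply, cyclicShift_mul_last, mul_cyclicShift_zero, of_apply,
        Fin.ext_iff, Fin.val_last, Fin.val_zero]
      grind
    · simp only [Matrix.sub_apply, cyclicShift_mul_last, mul_cyclicShift_succ, of_apply,
        Fin.ext_iff, Fin.val_last, Fin.val_succ, Fin.val_castSucc, Fin.val_zero]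
      grind
    · simp only [Matrix.sub_apply, cyclicShift_mul_castSucc, mul_cyclicShift_zero, of_apply,
        Fin.ext_iff, Fin.val_last, Fin.val_succ, Fin.val_castSucc, Fin.val_zero]
      grind
    · simp only [Matrix.sub_apply, cyclicShift_mul_castSucc, mul_cyclicShift_succ, of_apply,
        Fin.ext_iff, Fin.val_last, Fin.val_succ, Fin.val_castSucc, Fin.val_zero]
      grind
  · rw [trace, Fin.sum_univ_castSucc, Finset.sum_eq_zero]
    · simp
    · intro i _
      simp [Fin.castSucc_ne_last]
  · intro w
    simp only [mulVec, dotProduct, Fin.sum_univ_castSucc (n := k + 1)]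
    simp [Fin.castSucc_ne_last]
    refine Finset.dvd_sum fun i _ => ?_
    split_ifs
    · rw [mul_assoc]; exact dvd_mul_right _ _
    · simp

/-- A matrix congruent to `a` modulo `b`, whose trace is suitably prescribed, becomes a
commutator with `cyclicShift` after a change of its last column. -/
theorem exists_commutator_cyclicShift {k : ℕ} {a b : R}
    (B : Matrix (Fin (k + 2)) (Fin (k + 2)) R) (h : (k + 3) * a + b * B.trace = 0) :
    ∃ (Z : Matrix (Fin (k + 2)) (Fin (k + 2)) R) (w : Fin (k + 2) → R),
      cyclicShift (k + 1) b * Z - Z * cyclicShift (k + 1) b =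
        a • 1 + b • B + vecMulVec w (Pi.single (Fin.last (k + 1)) 1) ∧
      w (Fin.last (k + 1)) = a ∧ b ∣ (Z *ᵥ w) (Fin.last (k + 1)) + a * Z.trace := by
  obtain ⟨W, T, hW⟩ := exists_commutator_cyclicShift_eq_sub b B
  obtain ⟨D, hD, hDt, hDw⟩ := exists_commutator_cyclicShift_eq_scalar k b
  let ω : ℕ → R := fun i => - T (Fin.ofNat (k + 2) (k - i))
  obtain ⟨V, hV, hVt, hVw⟩ := exists_commutator_cyclicShift_eq_border (k := k) b ω
  have hT : T (Fin.last (k + 1)) = B.trace := by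
    have := congrArg trace hW
    rw [trace_sub, trace_mul_comm, sub_self, trace_sub, trace_vecMulVec, single_one_dotProduct]
      at this
    exact (sub_eq_zero.1 this.symm).symm
  let w : Fin (k + 2) → R := fun i => if i = Fin.last (k + 1) then a else ω i
  have hwl : w (Fin.last (k + 1)) = a := by simp [w]
  have hwk : w (Fin.last k).castSucc = ω k := by simp [w, Fin.ext_iff]
  refine ⟨a • D + V + b • W, w, ?_, hwl, ?_⟩
  · have hsplit : cyclicShift (k + 1) b * (a • D + V + b • W) -
        (a • D + V + b • W) * cyclicShift (k + 1) b =
        a • (cyclicShift (k + 1) b * D - D * cyclicShift (k + 1) b) +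
        (cyclicShift (k + 1) b * V - V * cyclicShift (k + 1) b) +
        b • (cyclicShift (k + 1) b * W - W * cyclicShift (k + 1) b) := by
      simp only [mul_add, add_mul, Matrix.mul_smul, Matrix.smul_mul, smul_sub]
      abel
    rw [hsplit, hD, hW]
    ext i j
    simp only [Matrix.add_apply, Matrix.smul_apply, Matrix.sub_apply, hV, vecMulVec_apply,
      smul_eq_mul, Matrix.single_apply, Pi.single_apply]
    by_cases hi : i = Fin.last (k + 1) <;> by_cases hj : j = Fin.last (k + 1)
    · subst hi hj
      simp [hwl, hT]
      linear_combination -h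
    · have hjk : (j : ℕ) ≤ k := by
        have := Fin.val_ne_of_ne hj
        have := j.2
        simp at *
        omega
      have : ω (k - j) = - T j := by
        simp only [ω]
        congr 2
        ext
        simp
        rw [Nat.sub_sub_self hjk, Nat.mod_eq_of_lt j.2]
      simp [hi, hj, this, Ne.symm hj]
      ring
    · simp [hi, hj, w, Ne.symm hi]
      ring
    · simp [hi, hj, Ne.symm hi]
  · obtain ⟨c, hc⟩ := hVw w
    rw [add_mulVec, add_mulVec, smul_mulVec, smul_mulVec, trace_add, trace_add, trace_smul,
      trace_smul, hDt, hVt]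
    simp only [Pi.add_apply, Pi.smul_apply, smul_eq_mul, hDw, hwk]
    rw [hwl] at hc
    exact ⟨c + (W *ᵥ w) (Fin.last (k + 1)) + a * W.trace - B.trace * ω k, by
      linear_combination hc + ω k * h⟩

/-- A trace-zero matrix whose first row is `(a, b, 0, …, 0)` and which is congruent to `a`
modulo `b` is a commutator of trace-zero matrices. -/
theorem exists_commutator_of_scalar_mod {k : ℕ} (A : Matrix (Fin (k + 3)) (Fin (k + 3)) R)
    (hA : A.trace = 0) (hrow : ∀ j, j ≠ 0 → j ≠ 1 → A 0 j = 0)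
    (hmod : ∀ i j, A 0 1 ∣ (A - scalar (Fin (k + 3)) (A 0 0)) i j) :
    ∃ X Y : Matrix (Fin (k + 3)) (Fin (k + 3)) R,
      X.trace = 0 ∧ Y.trace = 0 ∧ X * Y - Y * X = A := by
  choose B hB using hmod
  set a := A 0 0
  set b := A 0 1
  have hA' : ∀ i j, A i j = (if i = j then a else 0) + b * B i j := fun i j => by
    rw [← hB, Matrix.sub_apply, scalar_apply, diagonal_apply]; ring
  have htr : (k + 3) * a + b * trace (of fun i j : Fin (k + 2) => B i.succ j.succ) = 0 := by
    have hsucc : ∀ i : Fin (k + 2), A i.succ i.succ = a + b * B i.succ i.succ := fun i => by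
      rw [hA', if_pos rfl]
    rw [← hA, trace, trace, Fin.sum_univ_succ (n := k + 2)]
    simp only [diag_apply, of_apply, hsucc, Finset.sum_add_distrib, Finset.mul_sum,
      Finset.sum_const, Finset.card_univ, Fintype.card_fin, nsmul_eq_mul]
    push_cast
    ring
  obtain ⟨Z, w, hZ, hw, d, hd⟩ := exists_commutator_cyclicShift _ htr
  set N := cyclicShift (k + 1) b with hN
  have hζ : ∃ ζ, N *ᵥ ζ = (fun i => A i.succ 0) + Z *ᵥ w + Z.trace • w := by
    refine ⟨Fin.cons (B (Fin.last (k + 1)).succ 0 + d)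
      fun i => ((fun i : Fin (k + 2) => A i.succ 0) + Z *ᵥ w + Z.trace • w) i.castSucc, ?_⟩
    ext i
    refine Fin.lastCases ?_ (fun i => ?_) i
    · rw [hN, cyclicShift_mulVec_last]
      simp [hA', hw, Fin.succ_ne_zero]
      linear_combination -hd
    · rw [hN, cyclicShift_mulVec_castSucc, Fin.cons_succ]
  obtain ⟨ζ, hζ⟩ := hζ
  refine ⟨of (Fin.cons 0 fun i => Fin.cons (w i) (N i)),
    of (Fin.cons (Fin.cons (-Z.trace) (-Pi.single (Fin.last (k + 1)) 1))
      fun i => Fin.cons (ζ i) (Z i)), ?_, ?_, ?_⟩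
  · simpa [trace, Fin.sum_univ_succ (n := k + 2)] using trace_cyclicShift k b
  · simp [trace, Fin.sum_univ_succ (n := k + 2)]
  · ext i j
    rw [Matrix.sub_apply, Matrix.mul_apply, Matrix.mul_apply, Fin.sum_univ_succ (n := k + 2),
      Fin.sum_univ_succ (n := k + 2)]
    refine Fin.cases ?_ (fun i => ?_) i <;> refine Fin.cases ?_ (fun j => ?_) j
    · simp only [Matrix.of_apply, Fin.cons_zero, Fin.cons_succ, Pi.zero_apply, zero_mul, mul_zero,
        Finset.sum_const_zero, Pi.neg_apply, neg_mul, Finset.sum_neg_distrib, zero_add, zero_sub,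
        neg_neg]
      exact (single_one_dotProduct _ w).trans hw
    · have hlast : Pi.single (Fin.last (k + 1)) 1 ⬝ᵥ (fun x => N x j) = A 0 j.succ := by
        rw [single_one_dotProduct, hN, cyclicShift_last]
        refine Fin.cases ?_ (fun j => ?_) j
        · rw [Pi.single_eq_same]
          rfl
        · rw [Pi.single_eq_of_ne (Fin.succ_ne_zero j), hrow _ (Fin.succ_ne_zero _)]
          exact fun h => Fin.succ_ne_zero j (Fin.succ_injective _ h)
      simp only [Matrix.of_apply, Fin.cons_zero, Fin.cons_succ, Pi.zero_apply, zero_mul, mul_zero,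
        Finset.sum_const_zero, Pi.neg_apply, neg_mul, Finset.sum_neg_distrib, zero_add, zero_sub,
        neg_neg]
      exact hlast
    · have h : ∑ x, N i x * ζ x = A i.succ 0 + ∑ x, Z i x * w x + Z.trace * w i := congrFun hζ i
      simp
      linear_combination h
    · have h := congrFun (congrFun hZ i) j
      simp only [Matrix.sub_apply, Matrix.mul_apply, Matrix.add_apply, Matrix.smul_apply,
        vecMulVec_apply, of_apply, smul_eq_mul, Matrix.one_apply] at h
      simp [hA']
      rw [mul_ite, mul_one, mul_zero] at h
      linear_combination h

end

/-- Over any commutative principal ideal ring `R` (not necessarily a domain), every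
trace-zero matrix `A` with `n ≥ 3` is a commutator of two trace-zero matrices. -/
theorem trace_zero_is_commutator_PIR {R : Type*} [CommRing R] [IsPrincipalIdealRing R]
    {n : ℕ} (hn : 3 ≤ n)
    (A : Matrix (Fin n) (Fin n) R) (hA : A.trace = 0) :
    ∃ X Y : Matrix (Fin n) (Fin n) R,
      X.trace = 0 ∧ Y.trace = 0 ∧ X * Y - Y * X = A := by
  obtain ⟨k, rfl⟩ : ∃ k, n = k + 3 := ⟨n - 3, by omega⟩
  obtain ⟨Q, B, hB, hrow, hmod⟩ := exists_conj_scalar_mod A (o := 0) (p := 1) 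
    (q := Fin.last (k + 2)) (by simp) (by simp [Fin.ext_iff]) (by simp [Fin.ext_iff])
  have htr : ∀ M : Matrix (Fin (k + 3)) (Fin (k + 3)) R, (Q.1 * M * Q⁻¹.1).trace = M.trace :=
    fun M => by rw [trace_mul_comm, ← Matrix.mul_assoc, Units.inv_mul, Matrix.one_mul]
  have hAB : Q.1 * B * Q⁻¹.1 = A := by
    rw [← hB]
    simp [← Matrix.mul_assoc]
  obtain ⟨X, Y, hX, hY, hXY⟩ :=
    exists_commutator_of_scalar_mod B (by rw [← htr, hAB, hA]) hrow hmod
  have hmul : ∀ M N : Matrix (Fin (k + 3)) (Fin (k + 3)) R,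
      Q.1 * M * Q⁻¹.1 * (Q.1 * N * Q⁻¹.1) = Q.1 * (M * N) * Q⁻¹.1 := fun M N => by
    simp [Matrix.mul_assoc]
  refine ⟨Q.1 * X * Q⁻¹.1, Q.1 * Y * Q⁻¹.1, by rw [htr, hX], by rw [htr, hY], ?_⟩
  rw [hmul, hmul, ← Matrix.sub_mul, ← Matrix.mul_sub, hXY, hAB]
end

section
/- Let R be a local principal ideal domain whose residue field k satisfies |k| > 2. Then for every A ∈ SL_2(R) there exist x ∈ GL_2(R) and y ∈ SL_2(R) such that the group commutator x y x⁻¹ y⁻¹ equals A. Moreover, y can be taken to be GL_2(R)-conjugate to a matrix of the form ((0, 1), (−1, s)) for some s ∈ R. -/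
open Matrix

/-- The matrix `M` is conjugate to the companion matrix of its characteristic
polynomial. -/
def IsCyclicConj {R : Type*} [CommRing R] (M : Matrix (Fin 2) (Fin 2) R) : Prop :=
  ∃ g : Matrix (Fin 2) (Fin 2) R,
    IsUnit g.det ∧ M = g * !![0, 1; -M.det, M.trace] * g⁻¹

theorem eq_conj_of_mul_eq {R : Type*} [CommRing R] {M C g : Matrix (Fin 2) (Fin 2) R}
    (hg : IsUnit g.det) (h : M * g = g * C) : M = g * C * g⁻¹ := by
  rw [← h, Matrix.mul_nonsing_inv_cancel_right _ _ hg]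

/-- A matrix over a local ring that is not scalar modulo the maximal ideal has a cyclic vector. -/
theorem isCyclicConj_of_isUnit {R : Type*} [CommRing R] [IsLocalRing R]
    (M : Matrix (Fin 2) (Fin 2) R)
    (h : IsUnit (M 0 1) ∨ IsUnit (M 1 0) ∨ IsUnit (M 0 0 - M 1 1)) : IsCyclicConj M := by
  have key : ∀ u v : R,
      IsUnit ((M 0 0 * u + M 0 1 * v) * v - u * (M 1 0 * u + M 1 1 * v)) →
      IsCyclicConj M := by
    intro u v huv
    have hg : IsUnit (!![M 0 1 * v - M 1 1 * u, u; M 1 0 * u - M 0 0 * v, v]).det := by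
      rw [det_fin_two_of]
      convert huv using 1
      ring
    refine ⟨_, hg, eq_conj_of_mul_eq hg ?_⟩
    ext i j
    fin_cases i <;> fin_cases j <;>
      simp [Matrix.mul_apply, Fin.sum_univ_two, det_fin_two, trace_fin_two] <;> ring
  by_cases h01 : IsUnit (M 0 1)
  · exact key 0 1 (by simpa using h01)
  by_cases h10 : IsUnit (M 1 0)
  · exact key 1 0 (by simpa using h10)
  have hd : IsUnit (M 0 0 - M 1 1) := by tauto
  refine key 1 1 ?_
  by_contra hn
  have hmem := IsLocalRing.nonunits_add (IsLocalRing.nonunits_add hn h10)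
    (show -M 0 1 ∈ nonunits R from fun hu => h01 (by simpa using hu.neg))
  exact hmem (by convert hd using 1; ring)

theorem IsCyclicConj.conj {R : Type*} [CommRing R] {M g : Matrix (Fin 2) (Fin 2) R}
    (hg : IsUnit g.det) (h : IsCyclicConj M) : IsCyclicConj (g * M * g⁻¹) := by
  obtain ⟨w, hw, hM⟩ := h
  have hdet : (g * M * g⁻¹).det = M.det :=
    Matrix.det_conj ((Matrix.isUnit_iff_isUnit_det g).2 hg) M
  have htr : (g * M * g⁻¹).trace = M.trace := by
    rw [Matrix.trace_mul_cycle, Matrix.nonsing_inv_mul _ hg, Matrix.one_mul]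
  refine ⟨g * w, by rw [det_mul]; exact hg.mul hw, ?_⟩
  rw [hdet, htr, Matrix.mul_inv_rev]
  conv_lhs => rw [hM]
  simp only [Matrix.mul_assoc]

/-- If the residue field of a local ring has more than two elements, then for every `c` some unit
`q` has `q + c` a unit as well. -/
theorem exists_isUnit_isUnit_add {R : Type*} [CommRing R] [IsLocalRing R]
    (hk : 2 < Cardinal.mk (IsLocalRing.ResidueField R)) (c : R) :
    ∃ q : R, IsUnit q ∧ IsUnit (q + c) := by
  have hex : ∃ z : IsLocalRing.ResidueField R, z ≠ 0 ∧ z ≠ -IsLocalRing.residue R c := by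
    by_contra! hcon
    have huniv : (Set.univ : Set (IsLocalRing.ResidueField R)) ⊆
        {0, -IsLocalRing.residue R c} := by
      intro z _
      by_cases hz : z = 0
      · simp [hz]
      · simp [hcon z hz]
    have hle := Cardinal.mk_le_mk_of_subset huniv
    rw [Cardinal.mk_univ] at hle
    have hpair : Cardinal.mk ({0, -IsLocalRing.residue R c} :
        Set (IsLocalRing.ResidueField R)) ≤ 2 := by
      refine Cardinal.mk_insert_le.trans ?_
      rw [Cardinal.mk_singleton, one_add_one_eq_two]
    exact absurd hk (not_lt.2 (hle.trans hpair))
  obtain ⟨z, hz0, hzc⟩ := hex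
  obtain ⟨q, rfl⟩ := IsLocalRing.residue_surjective z
  refine ⟨q, (IsLocalRing.residue_ne_zero_iff_isUnit q).1 hz0,
    (IsLocalRing.residue_ne_zero_iff_isUnit _).1 fun h => hzc ?_⟩
  rw [map_add] at h
  exact eq_neg_of_add_eq_zero_left h

/-- Over a local PID, a nonzero matrix is a nonzero scalar times a matrix with a unit entry. -/
theorem exists_smul_isUnit_entry {R : Type*} [CommRing R] [IsDomain R]
    [IsPrincipalIdealRing R] [IsLocalRing R] (N : Matrix (Fin 2) (Fin 2) R) (hN : N ≠ 0) :
    ∃ (η : R) (B : Matrix (Fin 2) (Fin 2) R), η ≠ 0 ∧ N = η • B ∧ ∃ i j, IsUnit (B i j) := by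
  let I : Ideal R := Ideal.span (Set.range fun p : Fin 2 × Fin 2 => N p.1 p.2)
  obtain ⟨η, hη⟩ := (IsPrincipalIdealRing.principal I).principal
  have hdvd : ∀ i j, η ∣ N i j := fun i j => by
    rw [← Ideal.mem_span_singleton]
    change N i j ∈ Submodule.span R {η}
    rw [← hη]
    exact Ideal.subset_span ⟨(i, j), rfl⟩
  choose B hB using hdvd
  have hη0 : η ≠ 0 := by
    rintro rfl
    exact hN (by ext i j; simp [hB i j])
  refine ⟨η, Matrix.of B, hη0, by ext i j; simp [hB i j], ?_⟩
  by_contra! hcon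
  have hmem : η ∈ I := by
    rw [hη]
    exact Submodule.mem_span_singleton_self η
  obtain ⟨c, hc⟩ := Ideal.mem_span_range_iff_exists_fun.1 hmem
  have hone : ∑ p : Fin 2 × Fin 2, c p * B p.1 p.2 = 1 := by
    apply mul_left_cancel₀ hη0
    rw [mul_one, Finset.mul_sum]
    conv_rhs => rw [← hc]
    refine Finset.sum_congr rfl fun p _ => ?_
    simp only [hB]
    ring
  have hmax : ∑ p : Fin 2 × Fin 2, c p * B p.1 p.2 ∈ IsLocalRing.maximalIdeal R :=
    Ideal.sum_mem _ fun p _ => Ideal.mul_mem_left _ _ (hcon p.1 p.2)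
  rw [hone] at hmax
  exact hmax isUnit_one

/-- Every `A ∈ SL₂(R)` admits a `y ∈ SL₂(R)` such that `y` and `A * y` are cyclic of the same
trace. -/
theorem exists_isCyclicConj_trace_mul_eq {R : Type*} [CommRing R] [IsDomain R]
    [IsPrincipalIdealRing R] [IsLocalRing R]
    (hk : 2 < Cardinal.mk (IsLocalRing.ResidueField R))
    (A : Matrix (Fin 2) (Fin 2) R) (hA : A.det = 1) :
    ∃ y : Matrix (Fin 2) (Fin 2) R, y.det = 1 ∧ (A * y).trace = y.trace ∧
      IsCyclicConj y ∧ IsCyclicConj (A * y) := by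
  by_cases hN : A - 1 = 0
  · obtain rfl : A = 1 := sub_eq_zero.1 hN
    have hy : IsCyclicConj (!![0, 1; -1, 0] : Matrix (Fin 2) (Fin 2) R) :=
      isCyclicConj_of_isUnit _ (by simp)
    exact ⟨!![0, 1; -1, 0], by simp [det_fin_two_of], by simp, hy, by simpa using hy⟩
  obtain ⟨η, B, hη, hAB, hu⟩ := exists_smul_isUnit_entry (A - 1) hN
  obtain rfl : A = 1 + η • B := by rw [← hAB]; abel
  by_cases hB : IsUnit (B 0 1) ∨ IsUnit (B 1 0) ∨ IsUnit (B 0 0 - B 1 1)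
  · obtain ⟨g, hg, hBg⟩ := isCyclicConj_of_isUnit B hB
    obtain ⟨q, hq, hqη⟩ := exists_isUnit_isUnit_add hk η
    have htr : B.trace = -η * B.det := by
      apply mul_left_cancel₀ hη
      simp [det_fin_two] at hA
      simp only [det_fin_two, trace_fin_two]
      linear_combination hA
    generalize B.det = δ at *
    generalize B.trace = τ at *
    subst htr
    have hgi : g⁻¹ * g = 1 := Matrix.nonsing_inv_mul _ hg
    have hAg : (1 + η • B : Matrix (Fin 2) (Fin 2) R) =
        g * (1 + η • !![0, 1; -δ, -η * δ]) * g⁻¹ := by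
      rw [Matrix.mul_add, Matrix.add_mul, Matrix.mul_one, Matrix.mul_nonsing_inv _ hg,
        Matrix.mul_smul, Matrix.smul_mul, ← hBg]
    let y : Matrix (Fin 2) (Fin 2) R := !![1 + δ * q * (q + η), q; δ * (q + η), 1]
    have hAy : (1 + η • B) * (g * y * g⁻¹) =
        g * ((1 + η • !![0, 1; -δ, -η * δ]) * y) * g⁻¹ := by
      rw [hAg]
      simp only [Matrix.mul_assoc]
      rw [← Matrix.mul_assoc g⁻¹ g, hgi, Matrix.one_mul]
    refine ⟨g * y * g⁻¹, ?_, ?_, ?_, ?_⟩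
    · rw [Matrix.det_conj ((Matrix.isUnit_iff_isUnit_det g).2 hg)]
      simp only [y, det_fin_two_of]
      ring
    · rw [hAy, Matrix.trace_mul_cycle, ← Matrix.mul_assoc, hgi, Matrix.one_mul,
        Matrix.trace_mul_cycle g y, hgi, Matrix.one_mul]
      simp [y, trace_fin_two, Matrix.mul_apply, Fin.sum_univ_two]
      ring
    · exact (isCyclicConj_of_isUnit y (Or.inl hq)).conj hg
    · rw [hAy]
      refine (isCyclicConj_of_isUnit _ (Or.inl ?_)).conj hg
      convert hqη using 1
      simp [y, Matrix.mul_apply, Fin.sum_univ_two]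
  · push Not at hB
    obtain ⟨h01, h10, hd⟩ := hB
    have h00 : IsUnit (B 0 0) := by
      by_contra h00
      have h11 : ¬ IsUnit (B 1 1) := fun h => by
        have := IsLocalRing.nonunits_add h00
          (show -(B 0 0 - B 1 1) ∈ nonunits R from fun hu => hd (by simpa using hu.neg))
        exact this (by simpa using h)
      obtain ⟨i, j, hij⟩ := hu
      fin_cases i <;> fin_cases j <;> contradiction
    have hA00 : IsUnit (1 + η * B 0 0) := by
      by_contra hcon
      have hmem : (1 + η * B 0 0) * (1 + η * B 1 1) - (η * B 0 1) * (η * B 1 0) ∈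
          IsLocalRing.maximalIdeal R :=
        Ideal.sub_mem _ (Ideal.mul_mem_right _ _ hcon)
          (Ideal.mul_mem_left _ _ (Ideal.mul_mem_left _ _ h10))
      simp [det_fin_two] at hA
      rw [hA] at hmem
      exact hmem isUnit_one
    obtain ⟨p, hp⟩ : ∃ p, B 0 0 * p = B 1 0 - B 0 1 := by
      obtain ⟨u, hu⟩ := h00
      exact ⟨↑u⁻¹ * (B 1 0 - B 0 1), by rw [← hu, Units.mul_inv_cancel_left]⟩
    refine ⟨!![p, -1; 1, 0], by simp [det_fin_two_of], ?_,
      isCyclicConj_of_isUnit _ (by simp), isCyclicConj_of_isUnit _ (Or.inl ?_)⟩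
    · simp [trace_fin_two, Matrix.mul_apply, Fin.sum_univ_two]
      linear_combination η * hp
    · convert hA00.neg using 1
      simp [Matrix.mul_apply, Fin.sum_univ_two]

/-- Over a local PID `R` whose residue field has more than `2` elements, every `A ∈ SL_2(R)`
is a group commutator `x y x⁻¹ y⁻¹` with `x ∈ GL_2(R)` and `y ∈ SL_2(R)`, where `y` can be
taken `GL_2(R)`-conjugate to a matrix `((0, 1), (-1, s))`. -/
theorem SL2_commutator_GL2_local_PID {R : Type*} [CommRing R] [IsDomain R]
    [IsPrincipalIdealRing R] [IsLocalRing R]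
    (hk : 2 < Cardinal.mk (IsLocalRing.ResidueField R))
    (A : Matrix (Fin 2) (Fin 2) R) (hA : A.det = 1) :
    ∃ x y : Matrix (Fin 2) (Fin 2) R,
      IsUnit x.det ∧ y.det = 1 ∧ x * y * x⁻¹ * y⁻¹ = A ∧
      ∃ (g : Matrix (Fin 2) (Fin 2) R) (s : R),
        IsUnit g.det ∧ y = g * !![0, 1; -1, s] * g⁻¹ := by
  obtain ⟨y, hy, htr, ⟨g, hg, hyg⟩, ⟨h, hh, hAy⟩⟩ := exists_isCyclicConj_trace_mul_eq hk A hA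
  rw [htr, det_mul, hA, hy, one_mul] at hAy
  rw [hy] at hyg
  generalize y.trace = s at *
  have hgi : IsUnit (g⁻¹).det := Matrix.isUnit_nonsing_inv_det g hg
  have hconj : h * g⁻¹ * y * (h * g⁻¹)⁻¹ = A * y := by
    rw [hAy, hyg, Matrix.mul_inv_rev, Matrix.nonsing_inv_nonsing_inv g hg]
    simp only [Matrix.mul_assoc]
    rw [Matrix.nonsing_inv_mul_cancel_left _ _ hg, Matrix.nonsing_inv_mul_cancel_left _ _ hg]
  refine ⟨h * g⁻¹, y, by rw [det_mul]; exact hh.mul hgi, hy, ?_, g, s, hg, hyg⟩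
  rw [hconj, Matrix.mul_nonsing_inv_cancel_right _ _ (by rw [hy]; exact isUnit_one)]
end
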